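/- Let Q be a regular local ring, f₁,…,f_c a Q-regular sequence, and R = Q/(f₁,…,f_c) (a local complete intersection). Let M, N, L be finitely generated R-modules with N ≠ 0 and Tor_i^R(M,N) = 0 for all i > 0. If Ext^i_R(M ⊗_R N, L) = 0 for all sufficiently large i, then Ext^i_R(M, L) = 0 for all sufficiently large i. -/

import Mathlib

/-!
STATEMENT 0: If `R = Q ⧸ (f₁, …, f_c)` is a local complete intersection (`Q` regular local,
`f` a `Q`-regular sequence), `M, N, L` are finitely generated `R`-modules with `N ≠ 0` and
`Tor_i^R(M, N) = 0` for all `i > 0`, and `Ext^i_R(M ⊗_R N, L) = 0` for `i ≫ 0`, then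
`Ext^i_R(M, L) = 0` for `i ≫ 0`.
-/

open CategoryTheory CategoryTheory.Limits

universe u

/-- A Noetherian local ring is regular if its maximal ideal can be generated by
(Krull dimension of the ring) many elements. -/
def IsRegularLocal (Q : Type u) [CommRing Q] [IsLocalRing Q] : Prop :=
  IsNoetherianRing Q ∧ ∃ s : Finset Q, Ideal.span (s : Set Q) = IsLocalRing.maximalIdeal Q ∧
    (s.card : WithBot ℕ∞) = ringKrullDim Q

/-- A cochain complex of `R`-modules in non-negative degrees. -/
structure Cpx (R : Type u) [CommRing R] where
  /-- The terms of the complex. -/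
  X : ℕ → Type u
  [grp : ∀ n, AddCommGroup (X n)]
  [mod : ∀ n, Module R (X n)]
  /-- The differentials of the complex. -/
  d : ∀ n, X n →ₗ[R] X (n + 1)
  d_d : ∀ n x, d (n + 1) (d n x) = 0

attribute [instance] Cpx.grp Cpx.mod

namespace Cpx

variable {R : Type u} [CommRing R]

/-- The submodule of boundaries in degree `n`. -/
def B (J : Cpx R) : ∀ n, Submodule R (J.X n)
  | 0 => ⊥
  | n + 1 => LinearMap.range (J.d n)

/-- The submodule of cocycles in degree `n`. -/
def Z (J : Cpx R) (n : ℕ) : Submodule R (J.X n) := LinearMap.ker (J.d n)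

lemma d_mem_B (J : Cpx R) (n : ℕ) (x : J.X n) : J.d n x ∈ J.B (n + 1) := ⟨x, rfl⟩

lemma d_eq_zero_of_mem_B (J : Cpx R) {n : ℕ} {x : J.X n} (hx : x ∈ J.B n) : J.d n x = 0 := by
  cases n with
  | zero => obtain rfl : x = 0 := hx; simp
  | succ n => obtain ⟨y, rfl⟩ := hx; exact J.d_d n y

/-- The complex has no cohomology in degree `n`. -/
def ExactAt (J : Cpx R) (n : ℕ) : Prop := ∀ x : J.X n, J.d n x = 0 → x ∈ J.B n

/-- The complex has no cohomology in large degrees. -/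
def EvExact (J : Cpx R) : Prop := ∃ m, ∀ n, m ≤ n → J.ExactAt n

/-- The cohomology in degree `n` is finitely generated. -/
def FinAt (J : Cpx R) (n : ℕ) : Prop := ((J.Z n).map (J.B n).mkQ).FG

/-- The cohomology is finitely generated in large degrees. -/
def EvFin (J : Cpx R) : Prop := ∃ m, ∀ n, m ≤ n → J.FinAt n

/-- The complex `Hom(A, J)`. -/
def hom (A : Type u) [AddCommGroup A] [Module R A] (J : Cpx R) : Cpx R where
  X n := A →ₗ[R] J.X n
  d n := (J.d n).compRight R
  d_d n x := by ext a; exact J.d_d n (x a)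

end Cpx

/-- A first quadrant double complex of `R`-modules with anticommuting differentials. -/
structure Bicpx (R : Type u) [CommRing R] where
  /-- The terms of the double complex. -/
  X : ℕ → ℕ → Type u
  [grp : ∀ p q, AddCommGroup (X p q)]
  [mod : ∀ p q, Module R (X p q)]
  /-- The differential raising the first degree. -/
  h : ∀ p q, X p q →ₗ[R] X (p + 1) q
  /-- The differential raising the second degree. -/
  v : ∀ p q, X p q →ₗ[R] X p (q + 1)
  h_h : ∀ p q x, h (p + 1) q (h p q x) = 0
  v_v : ∀ p q x, v p (q + 1) (v p q x) = 0
  h_v : ∀ p q x, h p (q + 1) (v p q x) + v (p + 1) q (h p q x) = 0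

attribute [instance] Bicpx.grp Bicpx.mod

namespace Bicpx

variable {R : Type u} [CommRing R]

/-- The double complex with the two degrees exchanged. -/
def swap (D : Bicpx R) : Bicpx R where
  X p q := D.X q p
  h p q := D.v q p
  v p q := D.h q p
  h_h p q := D.v_v q p
  v_v p q := D.h_h q p
  h_v p q x := (add_comm _ _).trans (D.h_v q p x)

/-- The degree `n` part of the total complex. -/
abbrev TotX (D : Bicpx R) (n : ℕ) : Type u :=
  ∀ x : {x : ℕ × ℕ // x.1 + x.2 = n}, D.X x.1.1 x.1.2

/-- The component of an element of the total complex at a given bidegree. -/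
def cmp (D : Bicpx R) {n : ℕ} (p q : ℕ) (e : p + q = n) : D.TotX n →ₗ[R] D.X p q :=
  LinearMap.proj (φ := fun x : {x : ℕ × ℕ // x.1 + x.2 = n} => D.X x.1.1 x.1.2) ⟨(p, q), e⟩

lemma tot_ext (D : Bicpx R) {n : ℕ} {z w : D.TotX n}
    (H : ∀ p q e, D.cmp p q e z = D.cmp p q e w) : z = w := by
  funext ⟨⟨p, q⟩, e⟩
  exact H p q e

/-- The components of the first part of the total differential. -/
def totH (D : Bicpx R) (n : ℕ) : ∀ p q, p + q = n + 1 → (D.TotX n →ₗ[R] D.X p q)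
  | 0, _, _ => 0
  | p + 1, q, e => D.h p q ∘ₗ D.cmp p q (by omega)

/-- The components of the second part of the total differential. -/
def totV (D : Bicpx R) (n : ℕ) : ∀ p q, p + q = n + 1 → (D.TotX n →ₗ[R] D.X p q)
  | _, 0, _ => 0
  | p, q + 1, e => D.v p q ∘ₗ D.cmp p q (by omega)

/-- The total differential. -/
def totD (D : Bicpx R) (n : ℕ) : D.TotX n →ₗ[R] D.TotX (n + 1) :=
  LinearMap.pi fun x => D.totH n x.1.1 x.1.2 x.2 + D.totV n x.1.1 x.1.2 x.2

lemma cmp_totD_succ_succ (D : Bicpx R) {n : ℕ} (z : D.TotX n) (p q : ℕ)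
    (e : (p + 1) + (q + 1) = n + 1) :
    D.cmp (p + 1) (q + 1) e (D.totD n z) = D.h p (q + 1) (D.cmp p (q + 1) (by omega) z) +
      D.v (p + 1) q (D.cmp (p + 1) q (by omega) z) := rfl

lemma cmp_totD_zero_succ (D : Bicpx R) {n : ℕ} (z : D.TotX n) (q : ℕ)
    (e : 0 + (q + 1) = n + 1) :
    D.cmp 0 (q + 1) e (D.totD n z) = D.v 0 q (D.cmp 0 q (by omega) z) :=
  zero_add _

lemma cmp_totD_succ_zero (D : Bicpx R) {n : ℕ} (z : D.TotX n) (p : ℕ)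
    (e : (p + 1) + 0 = n + 1) :
    D.cmp (p + 1) 0 e (D.totD n z) = D.h p 0 (D.cmp p 0 (by omega) z) :=
  add_zero _

lemma totD_totD (D : Bicpx R) (n : ℕ) (z : D.TotX n) : D.totD (n + 1) (D.totD n z) = 0 := by
  refine D.tot_ext fun p q e => ?_
  rw [map_zero]
  rcases p with _ | _ | p <;> rcases q with _ | _ | q
  · omega
  · omega
  · rw [cmp_totD_zero_succ, cmp_totD_zero_succ, v_v]
  · omega
  · rw [cmp_totD_succ_succ, cmp_totD_succ_zero, cmp_totD_zero_succ, h_v]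
  · rw [cmp_totD_succ_succ, cmp_totD_succ_succ, cmp_totD_zero_succ, map_add, v_v, add_zero, h_v]
  · rw [cmp_totD_succ_zero, cmp_totD_succ_zero, h_h]
  · rw [cmp_totD_succ_succ, cmp_totD_succ_succ, cmp_totD_succ_zero, map_add, h_h,
      zero_add (D.h _ _ _), h_v]
  · rw [cmp_totD_succ_succ, cmp_totD_succ_succ, cmp_totD_succ_succ, map_add, map_add, h_h, v_v,
      zero_add, add_zero, h_v]

/-- The total complex of a double complex. -/
def tot (D : Bicpx R) : Cpx R where
  X := D.TotX
  d := D.totD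
  d_d := D.totD_totD

/-- The element of the total complex concentrated in a single bidegree. -/
def single (D : Bicpx R) {n : ℕ} (p q : ℕ) (e : p + q = n) : D.X p q →ₗ[R] D.TotX n :=
  LinearMap.single R (fun x : {x : ℕ × ℕ // x.1 + x.2 = n} => D.X x.1.1 x.1.2) ⟨(p, q), e⟩

lemma cmp_single_self (D : Bicpx R) {n : ℕ} (p q : ℕ) (e : p + q = n) (x : D.X p q) :
    D.cmp p q e (D.single p q e x) = x :=
  Pi.single_eq_same (M := fun x : {x : ℕ × ℕ // x.1 + x.2 = n} => D.X x.1.1 x.1.2) ⟨(p, q), e⟩ x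

lemma cmp_single_of_ne (D : Bicpx R) {n : ℕ} {p q p' q' : ℕ} (e : p + q = n) (e' : p' + q' = n)
    (x : D.X p q) (hp : p' ≠ p) : D.cmp p' q' e' (D.single p q e x) = 0 :=
  Pi.single_eq_of_ne (M := fun x : {x : ℕ × ℕ // x.1 + x.2 = n} => D.X x.1.1 x.1.2)
    (i := ⟨(p, q), e⟩) (i' := ⟨(p', q'), e'⟩)
    (by intro h; exact hp (congrArg (fun y => y.1.1) h)) x

/-- The rows of the double complex are exact in positive degrees. -/
def RowsExact (D : Bicpx R) : Prop :=
  ∀ p q (x : D.X (p + 1) q), D.h (p + 1) q x = 0 → ∃ y, D.h p q y = x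

/-- If the rows are exact, an element whose total differential vanishes outside of the zeroth
column is, up to a boundary, concentrated in the zeroth column. -/
lemma exists_sub_mem_B (D : Bicpx R) (hD : D.RowsExact) (n k : ℕ) (z : D.TotX n)
    (hz : ∀ p q e, D.cmp (p + 1) q e (D.totD n z) = 0)
    (hk : ∀ p q e, k < p → D.cmp p q e z = 0) :
    ∃ w : D.TotX n, z - w ∈ D.tot.B n ∧ ∀ p q e, D.cmp (p + 1) q e w = 0 := by
  induction k generalizing z with
  | zero => exact ⟨z, by rw [sub_self]; exact zero_mem _, fun p q e => hk _ q e (by omega)⟩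
  | succ k ih =>
    by_cases hkn : n < k + 1
    · exact ih z hz fun p q e hp => hk p q e (by omega)
    obtain ⟨m, rfl⟩ : ∃ m, n = m + 1 := ⟨n - 1, by omega⟩
    obtain ⟨q, hq⟩ : ∃ q, (k + 1) + q = m + 1 := ⟨m - k, by omega⟩
    have h0 : D.h (k + 1) q (D.cmp (k + 1) q hq z) = 0 := by
      have := hz (k + 1) q (by omega)
      cases q with
      | zero => rwa [cmp_totD_succ_zero] at this
      | succ q =>
        rwa [cmp_totD_succ_succ, hk (k + 1 + 1) q (by omega) (by omega), map_zero,
          add_zero] at this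
    obtain ⟨y, hy⟩ := hD k q _ h0
    have hb : D.totD m (D.single k q (by omega) y) ∈ D.tot.B (m + 1) := D.tot.d_mem_B m _
    obtain ⟨w, hw, hw'⟩ := ih (z - D.totD m (D.single k q (by omega) y))
      (fun p q e => by rw [map_sub, totD_totD, sub_zero, hz]) (by
        intro p' q' e' hp
        rw [map_sub, sub_eq_zero]
        by_cases hpk : p' = k + 1
        · subst hpk
          obtain rfl : q' = q := by omega
          rw [← hy]
          cases q' with
          | zero => rw [cmp_totD_succ_zero, cmp_single_self]
          | succ q =>
            rw [cmp_totD_succ_succ, cmp_single_self, cmp_single_of_ne _ _ _ _ (by omega),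
              map_zero, add_zero]
        · rw [hk p' q' e' (by omega)]
          obtain ⟨p', rfl⟩ : ∃ r, p' = r + 1 := ⟨p' - 1, by omega⟩
          cases q' with
          | zero => rw [cmp_totD_succ_zero, cmp_single_of_ne _ _ _ _ (by omega), map_zero]
          | succ q =>
            rw [cmp_totD_succ_succ, cmp_single_of_ne _ _ _ _ (by omega),
              cmp_single_of_ne _ _ _ _ (by omega), map_zero, map_zero, add_zero])
    refine ⟨w, ?_, hw'⟩
    have : z - w = (z - D.totD m (D.single k q (by omega) y) - w) +
      D.totD m (D.single k q (by omega) y) := by abel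
    rw [this]
    exact add_mem hw hb

/-- An augmentation of a double complex by a complex placed in front of the rows. -/
structure Aug (D : Bicpx R) (K : Cpx R) where
  /-- The augmentation map. -/
  ε : ∀ q, K.X q →ₗ[R] D.X 0 q
  inj : ∀ q, Function.Injective (ε q)
  v_ε : ∀ q x, D.v 0 q (ε q x) = ε (q + 1) (K.d q x)
  h_ε : ∀ q x, D.h 0 q (ε q x) = 0
  lift : ∀ q x, D.h 0 q x = 0 → ∃ y, ε q y = x

namespace Aug

variable {D : Bicpx R} {K : Cpx R} (a : D.Aug K)

/-- The map from the augmentation to the total complex. -/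
def toTot (n : ℕ) : K.X n →ₗ[R] D.TotX n := D.single 0 n (zero_add n) ∘ₗ a.ε n

lemma totD_toTot (n : ℕ) (x : K.X n) : D.totD n (a.toTot n x) = a.toTot (n + 1) (K.d n x) := by
  refine D.tot_ext fun p q e => ?_
  rcases p with _ | p
  · obtain rfl : q = n + 1 := by omega
    rw [cmp_totD_zero_succ, toTot, toTot, LinearMap.comp_apply, LinearMap.comp_apply,
      cmp_single_self, cmp_single_self, a.v_ε]
  · rw [toTot, toTot, LinearMap.comp_apply, LinearMap.comp_apply,
      cmp_single_of_ne _ _ _ _ (by omega)]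
    rcases q with _ | q
    · rw [cmp_totD_succ_zero]
      rcases p with _ | p
      · obtain rfl : n = 0 := by omega
        rw [cmp_single_self, a.h_ε]
      · rw [cmp_single_of_ne _ _ _ _ (by omega), map_zero]
    · rw [cmp_totD_succ_succ, cmp_single_of_ne _ _ _ (p' := p + 1) _ (by omega), map_zero,
        add_zero]
      rcases p with _ | p
      · obtain rfl : n = q + 1 := by omega
        rw [cmp_single_self, a.h_ε]
      · rw [cmp_single_of_ne _ _ _ _ (by omega), map_zero]

lemma exists_eq_toTot {n : ℕ} (w : D.TotX n) (hw : ∀ p q e, D.cmp (p + 1) q e w = 0)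
    (hd : ∀ p q e, D.cmp (p + 1) q e (D.totD n w) = 0) : ∃ x, a.toTot n x = w := by
  have h1 := hd 0 n (by omega)
  have h0 : D.h 0 n (D.cmp 0 n (zero_add n) w) = 0 := by
    cases n with
    | zero => rwa [cmp_totD_succ_zero] at h1
    | succ n => rwa [cmp_totD_succ_succ, hw, map_zero, add_zero] at h1
  obtain ⟨x, hx⟩ := a.lift n _ h0
  refine ⟨x, D.tot_ext fun p q e => ?_⟩
  rcases p with _ | p
  · obtain rfl : q = n := by omega
    rw [toTot, LinearMap.comp_apply, cmp_single_self, hx]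
  · rw [toTot, LinearMap.comp_apply, cmp_single_of_ne _ _ _ _ (by omega), hw]

lemma toTot_injective (n : ℕ) : Function.Injective (a.toTot n) := by
  intro x y hxy
  apply a.inj
  rw [← D.cmp_single_self 0 n (zero_add n) (a.ε n x), ← D.cmp_single_self 0 n (zero_add n) (a.ε n y)]
  exact congrArg _ hxy

lemma toTot_mem_B {n : ℕ} {x : K.X n} (hx : x ∈ K.B n) : a.toTot n x ∈ D.tot.B n := by
  cases n with
  | zero => obtain rfl : x = 0 := hx; rw [map_zero]; exact zero_mem _
  | succ n => obtain ⟨y, rfl⟩ := hx; exact ⟨a.toTot n y, a.totD_toTot n y⟩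

lemma exists_cocycle (hD : D.RowsExact) {n : ℕ} (z : D.TotX n) (hz : D.totD n z = 0) :
    ∃ x, K.d n x = 0 ∧ z - a.toTot n x ∈ D.tot.B n := by
  obtain ⟨w, hw, hw'⟩ := D.exists_sub_mem_B hD n n z (fun p q e => by rw [hz, map_zero])
    (fun p q e hp => by omega)
  have hdw : D.totD n w = 0 := by
    have : D.totD n (z - w) = 0 := D.tot.d_eq_zero_of_mem_B hw
    rwa [map_sub, hz, zero_sub, neg_eq_zero] at this
  obtain ⟨x, rfl⟩ := a.exists_eq_toTot w hw' (fun p q e => by rw [hdw, map_zero])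
  exact ⟨x, a.toTot_injective _ (by rw [← totD_toTot, hdw, map_zero]), hw⟩

lemma mem_B_of_toTot_mem_B (hD : D.RowsExact) {n : ℕ} (x : K.X n)
    (hx : a.toTot n x ∈ D.tot.B n) : x ∈ K.B n := by
  cases n with
  | zero =>
    have hx : a.toTot 0 x = 0 := hx
    exact a.toTot_injective 0 (hx.trans (map_zero _).symm)
  | succ n =>
    obtain ⟨(z : D.TotX n), (hz : D.totD n z = _)⟩ := hx
    have key : ∀ p q e, D.cmp (p + 1) q e (a.toTot (n + 1) x) = 0 := fun p q e => by
      rw [toTot, LinearMap.comp_apply, cmp_single_of_ne _ _ _ _ (by omega)]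
    obtain ⟨w, hw, hw'⟩ := D.exists_sub_mem_B hD n n z (fun p q e => by rw [hz, key])
      (fun p q e hp => by omega)
    have hdw : D.totD n w = D.totD n z := by
      have : D.totD n (z - w) = 0 := D.tot.d_eq_zero_of_mem_B hw
      rw [map_sub, sub_eq_zero] at this
      exact this.symm
    obtain ⟨y, rfl⟩ := a.exists_eq_toTot w hw' (fun p q e => by rw [hdw, hz, key])
    exact ⟨y, a.toTot_injective _ (by rw [← totD_toTot, hdw, hz])⟩

lemma exactAt_iff (a : D.Aug K) (hD : D.RowsExact) (n : ℕ) : D.tot.ExactAt n ↔ K.ExactAt n := by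
  constructor
  · intro H x hx
    refine a.mem_B_of_toTot_mem_B hD x (H _ ?_)
    change D.totD n _ = 0
    rw [totD_toTot, hx, map_zero]
  · intro H z hz
    obtain ⟨x, hx, hx'⟩ := a.exists_cocycle hD z hz
    exact (Submodule.sub_mem_iff_left _ (a.toTot_mem_B (H x hx))).1 hx'

lemma finAt (a : D.Aug K) (hD : D.RowsExact) [IsNoetherianRing R] {n : ℕ}
    (H : K.FinAt n) : D.tot.FinAt n := by
  let g : (K.X n ⧸ K.B n) →ₗ[R] (D.tot.X n ⧸ D.tot.B n) :=
    Submodule.mapQ _ _ (a.toTot n) fun x hx => a.toTot_mem_B hx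
  refine (Submodule.FG.map g H).of_le ?_
  rintro _ ⟨z, hz, rfl⟩
  obtain ⟨x, hx, hx'⟩ := a.exists_cocycle hD z hz
  exact ⟨(K.B n).mkQ x, ⟨x, hx, rfl⟩, ((Submodule.Quotient.eq _).2 hx').symm⟩

end Aug

end Bicpx

section Lifting

variable {R : Type u} [CommRing R] {A B C E P : Type u} [AddCommGroup A] [Module R A]
  [AddCommGroup B] [Module R B] [AddCommGroup C] [Module R C] [AddCommGroup E] [Module R E]
  [AddCommGroup P] [Module R P]

lemma exists_comp_eq_of_injective_module [Module.Injective R E] (g : B →ₗ[R] C) (x : B →ₗ[R] E)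
    (hx : ∀ b, g b = 0 → x b = 0) : ∃ y : C →ₗ[R] E, y ∘ₗ g = x := by
  let g' : (B ⧸ LinearMap.ker g) →ₗ[R] C := (LinearMap.ker g).liftQ g le_rfl
  have hg' : Function.Injective g' :=
    LinearMap.ker_eq_bot.1 (Submodule.ker_liftQ_eq_bot _ _ _ le_rfl)
  obtain ⟨y, hy⟩ := Module.Injective.out g' hg' ((LinearMap.ker g).liftQ x hx)
  exact ⟨y, LinearMap.ext fun b => hy ((LinearMap.ker g).mkQ b)⟩

lemma exists_comp_eq_of_surjective (g : B →ₗ[R] C) (hg : Function.Surjective g) (x : B →ₗ[R] E)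
    (hx : ∀ b, g b = 0 → x b = 0) : ∃ y : C →ₗ[R] E, y ∘ₗ g = x := by
  refine ⟨(LinearMap.ker g).liftQ x hx ∘ₗ (g.quotKerEquivOfSurjective hg).symm.toLinearMap, ?_⟩
  ext b
  have : (g.quotKerEquivOfSurjective hg).symm (g b) = (LinearMap.ker g).mkQ b :=
    (LinearEquiv.symm_apply_eq _).2 rfl
  exact congrArg ((LinearMap.ker g).liftQ x hx) this

lemma exists_comp_eq_of_projective [Module.Projective R P] (f : A →ₗ[R] B) (x : P →ₗ[R] B)
    (hx : ∀ p, ∃ a, f a = x p) : ∃ y : P →ₗ[R] A, f ∘ₗ y = x := by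
  obtain ⟨y, hy⟩ := Module.projective_lifting_property f.rangeRestrict
    (x.codRestrict (LinearMap.range f) hx) f.surjective_rangeRestrict
  refine ⟨y, LinearMap.ext fun p => ?_⟩
  exact congrArg Subtype.val (LinearMap.congr_fun hy p)

lemma Module.Injective.linearMap_of_flat [Module.Flat R P] [Module.Injective R E] :
    Module.Injective R (P →ₗ[R] E) where
  out X Y _ _ _ _ f hf g := by
    obtain ⟨h, hh⟩ := Module.Injective.out (f.rTensor P)
      (Module.Flat.rTensor_preserves_injective_linearMap f hf) (TensorProduct.lift g)
    refine ⟨TensorProduct.curry h, fun x => LinearMap.ext fun p => ?_⟩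
    exact hh (x ⊗ₜ p)

end Lifting

namespace Bicpx

variable {R : Type u} [CommRing R]

/-- Exchanging the degrees in the total complex. -/
def swapTot (D : Bicpx R) (n : ℕ) : D.TotX n →ₗ[R] D.swap.TotX n :=
  LinearMap.pi fun x => D.cmp x.1.2 x.1.1 ((add_comm _ _).trans x.2)

lemma cmp_swapTot (D : Bicpx R) {n : ℕ} (z : D.TotX n) (p q : ℕ) (e : p + q = n) :
    D.swap.cmp p q e (D.swapTot n z) = D.cmp q p ((add_comm _ _).trans e) z := rfl

lemma totD_swapTot (D : Bicpx R) {n : ℕ} (z : D.TotX n) :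
    D.swap.totD n (D.swapTot n z) = D.swapTot (n + 1) (D.totD n z) := by
  refine D.swap.tot_ext fun p q e => ?_
  rw [cmp_swapTot]
  rcases p with _ | p <;> rcases q with _ | q
  · omega
  · rw [cmp_totD_zero_succ, cmp_totD_succ_zero]; rfl
  · rw [cmp_totD_zero_succ, cmp_totD_succ_zero]; rfl
  · rw [cmp_totD_succ_succ, cmp_totD_succ_succ]; exact add_comm _ _

lemma tot_exactAt_of_swap (D : Bicpx R) {n : ℕ} (H : D.swap.tot.ExactAt n) :
    D.tot.ExactAt n := by
  intro (z : D.TotX n) hz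
  have hz' : D.swap.totD n (D.swapTot n z) = 0 := by
    rw [totD_swapTot]
    exact (congrArg _ hz).trans (map_zero _)
  have h := H (D.swapTot n z) hz'
  cases n with
  | zero =>
    have : D.swap.swapTot 0 (D.swapTot 0 z) = 0 := (congrArg _ h).trans (map_zero _)
    exact this
  | succ n =>
    obtain ⟨y, hy⟩ := h
    refine ⟨D.swap.swapTot n y, (D.swap.totD_swapTot y).trans ?_⟩
    exact congrArg (D.swap.swapTot (n + 1)) hy

lemma swap_tot_exactAt_iff (D : Bicpx R) (n : ℕ) : D.swap.tot.ExactAt n ↔ D.tot.ExactAt n :=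
  ⟨D.tot_exactAt_of_swap, fun H => D.swap.tot_exactAt_of_swap H⟩

/-- The double complex `Hom(A, D)`. -/
def hom (A : Type u) [AddCommGroup A] [Module R A] (D : Bicpx R) : Bicpx R where
  X p q := A →ₗ[R] D.X p q
  h p q := (D.h p q).compRight R
  v p q := (D.v p q).compRight R
  h_h p q x := LinearMap.ext fun a => D.h_h p q (x a)
  v_v p q x := LinearMap.ext fun a => D.v_v p q (x a)
  h_v p q x := LinearMap.ext fun a => D.h_v p q (x a)

section HomTot

variable (A : Type u) [AddCommGroup A] [Module R A] (D : Bicpx R)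

/-- The comparison between `Hom(A, Tot D)` and `Tot Hom(A, D)`. -/
def homTot (n : ℕ) : (A →ₗ[R] D.TotX n) ≃ₗ[R] (D.hom A).TotX n where
  toFun φ := fun x => D.cmp x.1.1 x.1.2 x.2 ∘ₗ φ
  invFun z := LinearMap.pi z
  map_add' _ _ := funext fun _ => LinearMap.ext fun _ => rfl
  map_smul' _ _ := funext fun _ => LinearMap.ext fun _ => rfl
  left_inv _ := rfl
  right_inv _ := rfl

lemma cmp_homTot {n : ℕ} (φ : A →ₗ[R] D.TotX n) (p q : ℕ) (e : p + q = n) :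
    (D.hom A).cmp p q e (D.homTot A n φ) = D.cmp p q e ∘ₗ φ := rfl

lemma totD_homTot {n : ℕ} (φ : A →ₗ[R] D.TotX n) :
    (D.hom A).totD n (D.homTot A n φ) = D.homTot A (n + 1) (D.totD n ∘ₗ φ) := by
  refine (D.hom A).tot_ext fun p q e => LinearMap.ext fun a => ?_
  rw [cmp_homTot, LinearMap.comp_apply, LinearMap.comp_apply]
  rcases p with _ | p <;> rcases q with _ | q
  · omega
  · rw [cmp_totD_zero_succ, cmp_totD_zero_succ]; rfl
  · rw [cmp_totD_succ_zero, cmp_totD_succ_zero]; rfl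
  · rw [cmp_totD_succ_succ, cmp_totD_succ_succ]; rfl

lemma tot_hom_exactAt {n : ℕ} (H : (D.hom A).tot.ExactAt n) : (D.tot.hom A).ExactAt n := by
  intro φ hφ
  have h := H (D.homTot A n φ)
    ((D.totD_homTot A φ).trans ((congrArg _ hφ).trans (map_zero _)))
  cases n with
  | zero => exact (D.homTot A 0).injective (h.trans (map_zero _).symm)
  | succ n =>
    obtain ⟨z, hz⟩ := h
    obtain ⟨ψ, rfl⟩ := (D.homTot A n).surjective z
    exact ⟨ψ, (D.homTot A (n + 1)).injective ((D.totD_homTot A ψ).symm.trans hz)⟩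

end HomTot

end Bicpx

/-- A chain complex of `R`-modules in non-negative degrees. -/
structure Chn (R : Type u) [CommRing R] where
  /-- The terms of the complex. -/
  X : ℕ → Type u
  [grp : ∀ n, AddCommGroup (X n)]
  [mod : ∀ n, Module R (X n)]
  /-- The differentials of the complex. -/
  d : ∀ n, X (n + 1) →ₗ[R] X n
  d_d : ∀ n x, d n (d (n + 1) x) = 0

attribute [instance] Chn.grp Chn.mod

namespace Chn

variable {R : Type u} [CommRing R]

/-- An augmentation making a chain complex into a projective resolution of a module. -/
structure Resolves (P : Chn R) (M : Type u) [AddCommGroup M] [Module R M] where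
  /-- The augmentation map. -/
  ε : P.X 0 →ₗ[R] M
  proj : ∀ n, Module.Projective R (P.X n)
  surj : Function.Surjective ε
  ε_d : ∀ x, ε (P.d 0 x) = 0
  exact_zero : ∀ x, ε x = 0 → ∃ y, P.d 0 y = x
  exact_succ : ∀ n x, P.d n x = 0 → ∃ y, P.d (n + 1) y = x

/-- The cochain complex `Hom(P, E)`. -/
def homC (P : Chn R) (E : Type u) [AddCommGroup E] [Module R E] : Cpx R where
  X n := P.X n →ₗ[R] E
  d n := LinearMap.lcomp R E (P.d n)
  d_d n x := LinearMap.ext fun a => (congrArg x (P.d_d n a)).trans (map_zero x)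

/-- The double complex `Hom(P, J)`. -/
def homB (P : Chn R) (J : Cpx R) : Bicpx R where
  X p q := P.X p →ₗ[R] J.X q
  h p q := LinearMap.lcomp R (J.X q) (P.d p)
  v p q := ((-1 : R) ^ p) • (J.d q).compRight R
  h_h p q x := LinearMap.ext fun a => (congrArg x (P.d_d p a)).trans (map_zero x)
  v_v p q x := LinearMap.ext fun a => by simp [J.d_d]
  h_v p q x := LinearMap.ext fun a => by simp [pow_succ]

variable {P : Chn R} {M : Type u} [AddCommGroup M] [Module R M]

lemma homB_rowsExact (hP : P.Resolves M) (J : Cpx R) [∀ q, Module.Injective R (J.X q)] :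
    (P.homB J).RowsExact := by
  intro p q x hx
  refine exists_comp_eq_of_injective_module (P.d p) x fun b hb => ?_
  obtain ⟨y, rfl⟩ := hP.exact_succ p b hb
  exact LinearMap.congr_fun hx y

/-- The augmentation of `Hom(P, J)` by `Hom(M, J)`, where `P` resolves `M`. -/
def homBAug (hP : P.Resolves M) (J : Cpx R) : (P.homB J).Aug (J.hom M) where
  ε q := LinearMap.lcomp R (J.X q) hP.ε
  inj q := LinearMap.lcomp_injective_of_surjective _ hP.surj
  v_ε q (x : M →ₗ[R] J.X q) := LinearMap.ext fun a =>
    show (-1 : R) ^ 0 • J.d q (x (hP.ε a)) = J.d q (x (hP.ε a)) by rw [pow_zero, one_smul]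
  h_ε q (x : M →ₗ[R] J.X q) := LinearMap.ext fun a => (congrArg x (hP.ε_d a)).trans (map_zero x)
  lift q x hx := by
    refine exists_comp_eq_of_surjective hP.ε hP.surj x fun b hb => ?_
    obtain ⟨y, rfl⟩ := hP.exact_zero b hb
    exact LinearMap.congr_fun hx y

lemma homB_swap_rowsExact (hP : P.Resolves M) (K : Cpx R) (hK : ∀ n, K.ExactAt (n + 1)) :
    (P.homB K).swap.RowsExact := by
  intro q p (x : P.X p →ₗ[R] K.X (q + 1)) hx
  have := hP.proj p
  have hu : IsUnit ((-1 : R) ^ p) := isUnit_one.neg.pow p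
  obtain ⟨y, hy⟩ := exists_comp_eq_of_projective (K.d q) x fun a =>
    hK q (x a) (hu.smul_eq_zero.1 (LinearMap.congr_fun hx a))
  refine ⟨((-1 : R) ^ p) • y, ?_⟩
  refine LinearMap.ext fun a => ?_
  have hya := LinearMap.congr_fun hy a
  change (-1 : R) ^ p • K.d q ((-1 : R) ^ p • y a) = x a
  rw [map_smul, smul_smul, ← mul_pow, neg_one_mul, neg_neg, one_pow, one_smul]
  exact hya

/-- The augmentation of `Hom(P, K)` by `Hom(P, L)`, where `K` is a right resolution of `L`. -/
def homBSwapAug (hP : P.Resolves M) (K : Cpx R) {L : Type u} [AddCommGroup L] [Module R L]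
    (η : L →ₗ[R] K.X 0) (hη : Function.Injective η) (hd : ∀ x, K.d 0 (η x) = 0)
    (hl : ∀ x, K.d 0 x = 0 → ∃ y, η y = x) : (P.homB K).swap.Aug (P.homC L) where
  ε p := η.compRight R
  inj p x y hxy := LinearMap.ext fun a => hη (LinearMap.congr_fun hxy a)
  v_ε p x := rfl
  h_ε p (x : P.X p →ₗ[R] L) := LinearMap.ext fun a =>
    show (-1 : R) ^ p • K.d 0 (η (x a)) = 0 by rw [hd, smul_zero]
  lift p (x : P.X p →ₗ[R] K.X 0) hx := by
    have := hP.proj p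
    have hu : IsUnit ((-1 : R) ^ p) := isUnit_one.neg.pow p
    exact exists_comp_eq_of_projective η x fun a =>
      hl (x a) (hu.smul_eq_zero.1 (LinearMap.congr_fun hx a))

/-- Balancing: `Hom(P, L)` and `Hom(M, K)` have the same cohomology. -/
lemma homC_exactAt_iff (hP : P.Resolves M) (K : Cpx R) [∀ q, Module.Injective R (K.X q)]
    (hK : ∀ n, K.ExactAt (n + 1)) {L : Type u} [AddCommGroup L] [Module R L]
    (η : L →ₗ[R] K.X 0) (hη : Function.Injective η) (hd : ∀ x, K.d 0 (η x) = 0)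
    (hl : ∀ x, K.d 0 x = 0 → ∃ y, η y = x) (n : ℕ) :
    (P.homC L).ExactAt n ↔ (K.hom M).ExactAt n := by
  rw [← (homBSwapAug hP K η hη hd hl).exactAt_iff (homB_swap_rowsExact hP K hK),
    ← (homBAug hP K).exactAt_iff (homB_rowsExact hP K), Bicpx.swap_tot_exactAt_iff]

end Chn

section Finiteness

variable {R : Type u} [CommRing R] {A A' B : Type u} [AddCommGroup A] [Module R A]
  [AddCommGroup A'] [Module R A'] [AddCommGroup B] [Module R B]

lemma exists_comp_eq_of_injective {X Y Z : Type u} [AddCommGroup X] [Module R X]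
    [AddCommGroup Y] [Module R Y] [AddCommGroup Z] [Module R Z] (f : Y →ₗ[R] Z)
    (hf : Function.Injective f) (x : X →ₗ[R] Z) (hx : ∀ a, ∃ y, f y = x a) :
    ∃ g : X →ₗ[R] Y, ∀ a, f (g a) = x a := by
  refine ⟨(LinearEquiv.ofInjective f hf).symm.toLinearMap ∘ₗ
    x.codRestrict (LinearMap.range f) hx, fun a => ?_⟩
  exact congrArg Subtype.val ((LinearEquiv.ofInjective f hf).apply_symm_apply ⟨x a, hx a⟩)

lemma Cpx.ExactAt.finAt {J : Cpx R} {n : ℕ} (H : J.ExactAt n) : J.FinAt n := by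
  have : (J.Z n).map (J.B n).mkQ = ⊥ := by
    rw [eq_bot_iff]
    rintro _ ⟨x, hx, rfl⟩
    exact (Submodule.Quotient.mk_eq_zero _).2 (H x hx)
  rw [Cpx.FinAt, this]
  exact Submodule.fg_bot

/-- Finiteness of cohomology along the connecting homomorphism. -/
lemma Cpx.finAt_hom_succ [IsNoetherianRing R] (J : Cpx R) [∀ n, Module.Injective R (J.X n)]
    (i : A' →ₗ[R] B) (π : B →ₗ[R] A) (hi : Function.Injective i) (hπ : Function.Surjective π)
    (hiπ : ∀ b, π b = 0 ↔ ∃ a, i a = b) {n : ℕ} (hA' : (J.hom A').FinAt n)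
    (hB : (J.hom B).FinAt (n + 1)) : (J.hom A).FinAt (n + 1) := by
  let g : ((A →ₗ[R] J.X (n + 1)) ⧸ (J.hom A).B (n + 1)) →ₗ[R]
      ((B →ₗ[R] J.X (n + 1)) ⧸ (J.hom B).B (n + 1)) :=
    Submodule.mapQ _ _ (LinearMap.lcomp R (J.X (n + 1)) π) (by
      rintro _ ⟨(x : A →ₗ[R] J.X n), rfl⟩
      exact ⟨x ∘ₗ π, rfl⟩)
  refine Submodule.fg_of_fg_map_of_fg_inf_ker g (hB.of_le ?_) ?_
  · rintro _ ⟨_, ⟨(x : A →ₗ[R] J.X (n + 1)), hx, rfl⟩, rfl⟩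
    exact ⟨x ∘ₗ π, LinearMap.ext fun b => LinearMap.congr_fun hx (π b), rfl⟩
  let S : Submodule R (B →ₗ[R] J.X n) :=
    LinearMap.ker ((J.d n).compRight R ∘ₗ LinearMap.lcomp R (J.X n) i)
  let r : S →ₗ[R] ((A' →ₗ[R] J.X n) ⧸ (J.hom A').B n) :=
    ((J.hom A').B n).mkQ ∘ₗ LinearMap.lcomp R (J.X n) i ∘ₗ S.subtype
  have hr : (LinearMap.range r).FG := by
    refine hA'.of_le ?_
    rintro _ ⟨ψ, rfl⟩
    exact ⟨_, ψ.2, rfl⟩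
  obtain ⟨δ, hδ⟩ := exists_comp_eq_of_injective (LinearMap.lcomp R (J.X (n + 1)) π)
    (LinearMap.lcomp_injective_of_surjective _ hπ) ((J.d n).compRight R ∘ₗ S.subtype) (by
      intro ψ
      refine exists_comp_eq_of_surjective π hπ (J.d n ∘ₗ ψ.1) fun b hb => ?_
      obtain ⟨a, rfl⟩ := (hiπ b).1 hb
      exact LinearMap.congr_fun ψ.2 a)
  have key : ∀ ψ : S, r.rangeRestrict ψ = 0 → ((J.hom A).B (n + 1)).mkQ (δ ψ) = 0 := by
    intro ψ hψ
    have hψ' : LinearMap.lcomp R (J.X n) i ψ.1 ∈ (J.hom A').B n :=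
      (Submodule.Quotient.mk_eq_zero _).1 (congrArg Subtype.val hψ)
    obtain ⟨ψ', hd, hψ'⟩ : ∃ ψ' : B →ₗ[R] J.X n, J.d n ∘ₗ ψ' = J.d n ∘ₗ ψ.1 ∧ ψ' ∘ₗ i = 0 := by
      cases n with
      | zero => exact ⟨ψ.1, rfl, hψ'⟩
      | succ n =>
        obtain ⟨(θ : A' →ₗ[R] J.X n), hθ⟩ := hψ'
        obtain ⟨θ', rfl⟩ := exists_comp_eq_of_injective_module i θ fun b hb => by
          rw [hi (hb.trans (map_zero i).symm), map_zero]
        refine ⟨ψ.1 - J.d n ∘ₗ θ', LinearMap.ext fun b => ?_, LinearMap.ext fun a => ?_⟩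
        · change J.d (n + 1) (ψ.1 b - J.d n (θ' b)) = _
          rw [map_sub, J.d_d, sub_zero]; rfl
        · exact sub_eq_zero.2 (LinearMap.congr_fun hθ a).symm
    obtain ⟨χ, hχ⟩ := exists_comp_eq_of_surjective π hπ ψ' fun b hb => by
      obtain ⟨a, rfl⟩ := (hiπ b).1 hb
      exact LinearMap.congr_fun hψ' a
    refine (Submodule.Quotient.mk_eq_zero _).2 ⟨χ, ?_⟩
    refine LinearMap.lcomp_injective_of_surjective (S := R) (N := J.X (n + 1)) π hπ ?_
    refine Eq.trans ?_ (hδ ψ).symm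
    rw [← hχ] at hd
    exact hd
  obtain ⟨δ', hδ'⟩ := exists_comp_eq_of_surjective r.rangeRestrict r.surjective_rangeRestrict
    (((J.hom A).B (n + 1)).mkQ ∘ₗ δ) key
  have : Module.Finite R (LinearMap.range r) := Module.Finite.iff_fg.2 hr
  have hfg : (LinearMap.range δ').FG := Module.Finite.iff_fg.1 inferInstance
  refine hfg.of_le ?_
  rintro _ ⟨⟨(x : A →ₗ[R] J.X (n + 1)), -, rfl⟩, hx⟩
  obtain ⟨(ψ : B →ₗ[R] J.X n), hψ⟩ :
    LinearMap.lcomp R (J.X (n + 1)) π x ∈ (J.hom B).B (n + 1) :=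
      (Submodule.Quotient.mk_eq_zero _).1 hx
  have hS : ψ ∈ S := by
    refine LinearMap.ext fun a => (LinearMap.congr_fun hψ (i a)).trans ?_
    change x (π (i a)) = 0
    rw [(hiπ _).2 ⟨a, rfl⟩, map_zero]
  refine ⟨r.rangeRestrict ⟨ψ, hS⟩, (LinearMap.congr_fun hδ' ⟨ψ, hS⟩).trans ?_⟩
  refine congrArg ((J.hom A).B (n + 1)).mkQ ?_
  refine LinearMap.lcomp_injective_of_surjective (S := R) (N := J.X (n + 1)) π hπ ?_
  exact (hδ ⟨ψ, hS⟩).trans hψ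

lemma Cpx.hom_exactAt_succ_of_projective [Module.Projective R A] {J : Cpx R} {n : ℕ}
    (H : J.ExactAt (n + 1)) : (J.hom A).ExactAt (n + 1) := by
  intro (x : A →ₗ[R] J.X (n + 1)) hx
  exact exists_comp_eq_of_projective (J.d n) x fun a => H (x a) (LinearMap.congr_fun hx a)

/-- Finiteness of the cohomology of `Hom(M, I)`, where `I` is an injective resolution of a finite
module. -/
lemma Cpx.finAt_hom_of_resolution [IsNoetherianRing R] (I : Cpx R)
    [∀ n, Module.Injective R (I.X n)] (hI : ∀ n, I.ExactAt (n + 1)) {L : Type u} [AddCommGroup L]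
    [Module R L] [Module.Finite R L] (η : L →ₗ[R] I.X 0) (hη : Function.Injective η)
    (hl : ∀ x, I.d 0 x = 0 → ∃ y, η y = x) (n : ℕ) (M : Type u) [AddCommGroup M] [Module R M]
    [Module.Finite R M] : (I.hom M).FinAt n := by
  induction n generalizing M with
  | zero =>
    obtain ⟨k, π, hπ⟩ := Module.Finite.exists_fin' R M
    have : Module.Finite R (M →ₗ[R] L) :=
      Module.Finite.of_injective _ (LinearMap.lcomp_injective_of_surjective (S := R) (N := L) π hπ)
    have hfg : (LinearMap.range (((I.hom M).B 0).mkQ ∘ₗ η.compRight R)).FG :=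
      Module.Finite.iff_fg.1 inferInstance
    refine hfg.of_le ?_
    rintro _ ⟨(x : M →ₗ[R] I.X 0), hx, rfl⟩
    obtain ⟨y, hy⟩ := exists_comp_eq_of_injective η hη x fun a =>
      hl (x a) (LinearMap.congr_fun hx a)
    exact ⟨y, congrArg ((I.hom M).B 0).mkQ (LinearMap.ext hy)⟩
  | succ n ih =>
    obtain ⟨k, π, hπ⟩ := Module.Finite.exists_fin' R M
    refine I.finAt_hom_succ (LinearMap.ker π).subtype π Subtype.val_injective hπ (fun b => ?_)
      (ih _) (hom_exactAt_succ_of_projective (hI n)).finAt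
    exact ⟨fun hb => ⟨⟨b, hb⟩, rfl⟩, fun ⟨a, ha⟩ => ha ▸ a.2⟩

end Finiteness

namespace Chn

variable {R : Type u} [CommRing R] {P G : Chn R} {M N : Type u} [AddCommGroup M] [Module R M]
  [AddCommGroup N] [Module R N]

/-- Balancing of `Tor`, in its dual form. -/
lemma homC_hom_exactAt (hP : P.Resolves M) (hG : G.Resolves N)
    (htor : ∀ n x, (G.d n).lTensor M x = 0 → ∃ y, (G.d (n + 1)).lTensor M y = x)
    (E : Type u) [AddCommGroup E] [Module R E] [Module.Injective R E] (n : ℕ) :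
    (P.homC (N →ₗ[R] E)).ExactAt (n + 1) := by
  have : ∀ q, Module.Injective R ((G.homC E).X q) := fun q =>
    have := hG.proj q
    Module.Injective.linearMap_of_flat
  refine (homC_exactAt_iff hP (G.homC E) (fun q x hx => ?_) (LinearMap.lcomp R E hG.ε)
    (LinearMap.lcomp_injective_of_surjective _ hG.surj) (fun x => LinearMap.ext fun a =>
      (congrArg x (hG.ε_d a)).trans (map_zero x)) (fun x hx => ?_) (n + 1)).2 ?_
  · refine exists_comp_eq_of_injective_module (G.d q) x fun b hb => ?_
    obtain ⟨y, rfl⟩ := hG.exact_succ q b hb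
    exact LinearMap.congr_fun hx y
  · refine exists_comp_eq_of_surjective hG.ε hG.surj x fun b hb => ?_
    obtain ⟨y, rfl⟩ := hG.exact_zero b hb
    exact LinearMap.congr_fun hx y
  · intro (x : M →ₗ[R] G.X (n + 1) →ₗ[R] E) hx
    obtain ⟨y, hy⟩ := exists_comp_eq_of_injective_module ((G.d n).lTensor M)
      (TensorProduct.lift x) (by
        intro b hb
        obtain ⟨c, rfl⟩ := htor n b hb
        have : TensorProduct.lift x ∘ₗ (G.d (n + 1)).lTensor M = 0 :=
          TensorProduct.ext' fun m g => LinearMap.congr_fun (LinearMap.congr_fun hx m) g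
        exact LinearMap.congr_fun this c)
    exact ⟨TensorProduct.curry y, LinearMap.ext fun m => LinearMap.ext fun g =>
      LinearMap.congr_fun hy (m ⊗ₜ g)⟩

lemma hom_homB_rowsExact (I : Cpx R)
    (H : ∀ n q, (P.homC (N →ₗ[R] I.X q)).ExactAt (n + 1)) : ((P.homB I).hom N).RowsExact := by
  intro p q (x : N →ₗ[R] P.X (p + 1) →ₗ[R] I.X q) hx
  obtain ⟨(y : P.X p →ₗ[R] N →ₗ[R] I.X q), hy⟩ := H p q x.flip (LinearMap.ext fun a =>
    LinearMap.ext fun b => LinearMap.congr_fun (LinearMap.congr_fun hx b) a)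
  exact ⟨y.flip, LinearMap.ext fun a => LinearMap.ext fun b =>
    LinearMap.congr_fun (LinearMap.congr_fun hy b) a⟩

/-- The augmentation of `Hom(N, Hom(P, I))` by `Hom(N, Hom(M, I))`. -/
def homHomBAug (hP : P.Resolves M) (N : Type u) [AddCommGroup N] [Module R N] (I : Cpx R) :
    ((P.homB I).hom N).Aug ((I.hom M).hom N) where
  ε q := ((homBAug hP I).ε q).compRight R
  inj q x y hxy := LinearMap.ext fun a => (homBAug hP I).inj q (LinearMap.congr_fun hxy a)
  v_ε q (x : N →ₗ[R] M →ₗ[R] I.X q) := LinearMap.ext fun a => (homBAug hP I).v_ε q (x a)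
  h_ε q (x : N →ₗ[R] M →ₗ[R] I.X q) := LinearMap.ext fun a => (homBAug hP I).h_ε q (x a)
  lift q (x : N →ₗ[R] P.X 0 →ₗ[R] I.X q) hx := by
    obtain ⟨y, hy⟩ := exists_comp_eq_of_injective ((homBAug hP I).ε q) ((homBAug hP I).inj q) x
      fun a => (homBAug hP I).lift q (x a) (LinearMap.congr_fun hx a)
    exact ⟨y, LinearMap.ext hy⟩

lemma hom_hom_exactAt {I : Cpx R} {n : ℕ} (H : (I.hom (TensorProduct R M N)).ExactAt n) :
    ((I.hom M).hom N).ExactAt n := by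
  intro (x : N →ₗ[R] M →ₗ[R] I.X n) hx
  have h := H (TensorProduct.lift x.flip) (TensorProduct.ext' fun a b =>
    LinearMap.congr_fun (LinearMap.congr_fun hx b) a)
  cases n with
  | zero =>
    refine LinearMap.ext fun a => LinearMap.ext fun b => ?_
    exact LinearMap.congr_fun (show TensorProduct.lift x.flip = 0 from h) (b ⊗ₜ a)
  | succ n =>
    obtain ⟨(y : TensorProduct R M N →ₗ[R] I.X n), hy⟩ := h
    exact ⟨(TensorProduct.curry y).flip, LinearMap.ext fun a => LinearMap.ext fun b =>
      LinearMap.congr_fun hy (b ⊗ₜ a)⟩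

lemma homB_tot_injective (hP : P.Resolves M) (I : Cpx R) [∀ n, Module.Injective R (I.X n)]
    (n : ℕ) : Module.Injective R ((P.homB I).tot.X n) := by
  have : ∀ x : {x : ℕ × ℕ // x.1 + x.2 = n}, Module.Injective R ((P.homB I).X x.1.1 x.1.2) :=
    fun x => by
      have := hP.proj x.1.1
      exact Module.Injective.linearMap_of_flat
  exact inferInstanceAs (Module.Injective R ((P.homB I).TotX n))

/-- The vanishing of `Tor(M, N)` and the eventual vanishing of `Ext(M ⊗ N, L)` make
`Hom(N, Hom(P, I))` eventually exact. -/
lemma evExact_hom_tot (hP : P.Resolves M) (hG : G.Resolves N)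
    (htor : ∀ n x, (G.d n).lTensor M x = 0 → ∃ y, (G.d (n + 1)).lTensor M y = x)
    (I : Cpx R) [∀ n, Module.Injective R (I.X n)]
    (H : (I.hom (TensorProduct R M N)).EvExact) : ((P.homB I).tot.hom N).EvExact := by
  obtain ⟨m, hm⟩ := H
  refine ⟨m, fun n hn => Bicpx.tot_hom_exactAt _ _ ?_⟩
  refine ((homHomBAug hP N I).exactAt_iff (hom_homB_rowsExact I fun n q => ?_) n).2
    (hom_hom_exactAt (hm n hn))
  exact homC_hom_exactAt hP hG htor (I.X q) n

end Chn

section RelInj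

variable {Q : Type u} [CommRing Q]

/-- A module is killed by an ideal. -/
def Killed (I : Ideal Q) (E : Type u) [AddCommGroup E] [Module Q E] : Prop :=
  ∀ a ∈ I, ∀ e : E, a • e = 0

/-- A module killed by `I` is relatively injective if it is injective as a `Q ⧸ I`-module. -/
structure RelInj (I : Ideal Q) (E : Type u) [AddCommGroup E] [Module Q E] : Prop where
  killed : Killed I E
  out : ∀ ⦃X Y : Type u⦄ [AddCommGroup X] [AddCommGroup Y] [Module Q X] [Module Q Y],
    Killed I Y → ∀ (f : X →ₗ[Q] Y), Function.Injective f → ∀ g : X →ₗ[Q] E,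
      ∃ h : Y →ₗ[Q] E, ∀ x, h (f x) = g x

variable {I I' : Ideal Q} {A B C E J : Type u} [AddCommGroup A] [Module Q A] [AddCommGroup B]
  [Module Q B] [AddCommGroup C] [Module Q C] [AddCommGroup E] [Module Q E] [AddCommGroup J]
  [Module Q J]

lemma smul_eq_zero_of_mem_sup {x : Q} {e : E} (hI : ∀ a ∈ I, a • e = 0) (hx : x • e = 0) {a : Q}
    (ha : a ∈ I ⊔ Ideal.span {x}) : a • e = 0 := by
  have : I ⊔ Ideal.span {x} ≤ LinearMap.ker (LinearMap.toSpanSingleton Q E e) :=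
    sup_le hI ((Ideal.span_singleton_le_iff_mem _).2 hx)
  exact this ha

lemma Killed.mono (h : Killed I' E) (hI : I ≤ I') : Killed I E := fun a ha => h a (hI ha)

lemma Killed.quotient (h : Killed I E) (S : Submodule Q E) : Killed I (E ⧸ S) := by
  intro a ha e
  obtain ⟨e, rfl⟩ := S.mkQ_surjective e
  rw [← map_smul, h a ha, map_zero]

lemma killed_torsionBySet (I : Ideal Q) (E : Type u) [AddCommGroup E] [Module Q E] :
    Killed I (Submodule.torsionBySet Q E (I : Set Q)) := fun a ha e =>
  Subtype.ext ((Submodule.mem_torsionBySet_iff _ _).1 e.2 ⟨a, ha⟩)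

lemma RelInj.injective (h : RelInj (⊥ : Ideal Q) E) : Module.Injective Q E where
  out X Y _ _ _ _ f hf g := h.out (fun a ha e => by
    rw [(Submodule.mem_bot Q).1 ha, zero_smul]) f hf g

lemma RelInj.of_injective (h : Module.Injective Q E) : RelInj (⊥ : Ideal Q) E where
  killed a ha e := by rw [(Submodule.mem_bot Q).1 ha, zero_smul]
  out _ _ _ _ _ _ _ f hf g := h.out f hf g

lemma RelInj.of_quotient [Module (Q ⧸ I) E] [IsScalarTower Q (Q ⧸ I) E]
    [Module.Injective (Q ⧸ I) E] : RelInj I E where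
  killed a ha e := by
    rw [← one_smul (Q ⧸ I) e, ← smul_assoc, Algebra.smul_def,
      show algebraMap Q (Q ⧸ I) a = 0 from Ideal.Quotient.eq_zero_iff_mem.2 ha, zero_mul,
      zero_smul]
  out X Y _ _ _ _ hY f hf g := by
    have hX : Killed I X := fun a ha x => hf (by rw [map_smul, hY a ha, map_zero])
    have hY' : Module.IsTorsionBySet Q Y I := fun y a => hY a a.2 y
    have hX' : Module.IsTorsionBySet Q X I := fun x a => hX a a.2 x
    let _ := hY'.module
    let _ := hX'.module
    obtain ⟨h, hh⟩ := Module.Injective.out (R := Q ⧸ I)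
      { toFun := f
        map_add' := map_add f
        map_smul' := fun r x => by
          obtain ⟨r, rfl⟩ := Ideal.Quotient.mk_surjective r
          exact map_smul f r x } hf
      ({ toFun := g
         map_add' := map_add g
         map_smul' := fun r x => by
          obtain ⟨r, rfl⟩ := Ideal.Quotient.mk_surjective r
          exact (map_smul g r x).trans (algebraMap_smul (Q ⧸ I) r (g x)).symm } : X →ₗ[Q ⧸ I] E)
    refine ⟨{ toFun := h
              map_add' := map_add h
              map_smul' := fun r x => ?_ }, hh⟩
    exact (map_smul h (Ideal.Quotient.mk I r) x).trans (algebraMap_smul (Q ⧸ I) r (h x))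

lemma RelInj.torsionBySet (h : RelInj I E) (hI : I ≤ I') :
    RelInj I' (Submodule.torsionBySet Q E (I' : Set Q)) where
  killed := killed_torsionBySet I' E
  out X Y _ _ _ _ hY f hf g := by
    obtain ⟨k, hk⟩ := h.out (hY.mono hI) f hf (Submodule.subtype _ ∘ₗ g)
    refine ⟨k.codRestrict _ fun y => (Submodule.mem_torsionBySet_iff _ _).2 fun a => ?_,
      fun x => Subtype.ext (hk x)⟩
    change (a : Q) • k y = 0
    rw [← map_smul, hY a a.2, map_zero]

lemma RelInj.prod (hE : RelInj I E) (hC : RelInj I C) : RelInj I (E × C) where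
  killed a ha e := Prod.ext (hE.killed a ha _) (hC.killed a ha _)
  out X Y _ _ _ _ hY f hf g := by
    obtain ⟨h, hh⟩ := hE.out hY f hf (LinearMap.fst Q E C ∘ₗ g)
    obtain ⟨k, hk⟩ := hC.out hY f hf (LinearMap.snd Q E C ∘ₗ g)
    exact ⟨h.prod k, fun x => Prod.ext (hh x) (hk x)⟩

lemma exists_relInj (I : Ideal Q) (hA : Killed I A) :
    ∃ (E : ModuleCat.{u} Q) (ι : A →ₗ[Q] E), RelInj I E ∧ Function.Injective ι := by
  obtain ⟨⟨H, _, i, _⟩⟩ := EnoughInjectives.presentation (ModuleCat.of Q A)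
  let j : A →ₗ[Q] H := i.hom
  have hj : Function.Injective j := (ModuleCat.mono_iff_injective i).1 inferInstance
  have hH : Module.Injective Q H := Module.injective_module_of_injective_object Q H
  refine ⟨ModuleCat.of Q (Submodule.torsionBySet Q H (I : Set Q)),
    j.codRestrict _ fun a => (Submodule.mem_torsionBySet_iff _ _).2 fun r => ?_,
    (RelInj.of_injective hH).torsionBySet bot_le, fun a b hab => hj (congrArg Subtype.val hab)⟩
  change (r : Q) • j a = 0
  rw [← map_smul, hA r r.2, map_zero]

lemma RelInj.exists_comp_eq (hE : RelInj I E) (hC : Killed I C) (g : B →ₗ[Q] C) (x : B →ₗ[Q] E)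
    (hx : ∀ b, g b = 0 → x b = 0) : ∃ y : C →ₗ[Q] E, ∀ b, y (g b) = x b := by
  let g' : (B ⧸ LinearMap.ker g) →ₗ[Q] C := (LinearMap.ker g).liftQ g le_rfl
  have hg' : Function.Injective g' :=
    LinearMap.ker_eq_bot.1 (Submodule.ker_liftQ_eq_bot _ _ _ le_rfl)
  obtain ⟨y, hy⟩ := hE.out hC g' hg' ((LinearMap.ker g).liftQ x hx)
  exact ⟨y, fun b => hy ((LinearMap.ker g).mkQ b)⟩

/-- A module killed by `I` receives a surjection from a direct sum of copies of `Q ⧸ I`. -/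
lemma exists_surjective_of_killed {x : Q} (hx : ∀ a, x * a ∈ I → a ∈ I) (hB : Killed I B) :
    ∃ (F : ModuleCat.{u} Q) (p : F →ₗ[Q] B), Function.Surjective p ∧ Killed I F ∧
      ∀ e : F, x • e = 0 → e = 0 := by
  let p : (B →₀ Q ⧸ I) →ₗ[Q] B :=
    Finsupp.lsum Q fun b => I.liftQ (LinearMap.toSpanSingleton Q B b) fun a ha => hB a ha b
  refine ⟨ModuleCat.of Q (B →₀ Q ⧸ I), p, fun b => ⟨Finsupp.single b 1, ?_⟩, fun a ha e => ?_,
    fun e he => ?_⟩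
  · change p (Finsupp.single b 1) = b
    rw [Finsupp.lsum_single]
    exact one_smul Q b
  · refine Finsupp.ext fun b => ?_
    obtain ⟨r, hr⟩ := Ideal.Quotient.mk_surjective (e b)
    refine (congrArg (a • ·) hr.symm).trans ?_
    exact Ideal.Quotient.eq_zero_iff_mem.2 (I.mul_mem_right r ha)
  · refine Finsupp.ext fun b => ?_
    obtain ⟨r, hr⟩ := Ideal.Quotient.mk_surjective (e b)
    have h := (congrArg (x • ·) hr).trans (DFunLike.congr_fun he b)
    exact hr.symm.trans
      (Ideal.Quotient.eq_zero_iff_mem.2 (hx r (Ideal.Quotient.eq_zero_iff_mem.1 h)))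

/-- Relative injectivity of a quotient by a module which is relatively injective modulo a
further regular element. -/
lemma RelInj.quotient {x : Q} (hx : ∀ a, x * a ∈ I → a ∈ I) (hE : RelInj I E)
    (hJ : RelInj (I ⊔ Ideal.span {x}) J) (ι : J →ₗ[Q] E) (hι : Function.Injective ι) :
    RelInj I (E ⧸ LinearMap.range ι) where
  killed := hE.killed.quotient _
  out A B _ _ _ _ hB f hf g := by
    have hxJ : ∀ j : J, x • j = 0 := fun j =>
      hJ.killed x (Ideal.mem_sup_right (Ideal.mem_span_singleton_self x)) j
    obtain ⟨F, p, hp, hF, hxF⟩ := exists_surjective_of_killed hx hB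
    let A' : Submodule Q F := (LinearMap.range f).comap p
    obtain ⟨p', hp'⟩ := exists_comp_eq_of_injective f hf (p ∘ₗ A'.subtype) fun a => a.2
    let Y : Submodule Q (A' × E) := LinearMap.ker
      ((g ∘ₗ p') ∘ₗ LinearMap.fst Q A' E - (LinearMap.range ι).mkQ ∘ₗ LinearMap.snd Q A' E)
    have hY : ∀ y : Y, g (p' y.1.1) = (LinearMap.range ι).mkQ y.1.2 := fun y => sub_eq_zero.1 y.2
    let xY : Submodule Q Y := LinearMap.range (LinearMap.lsmul Q Y x)
    let k : J →ₗ[Q] Y := (LinearMap.inr Q A' E ∘ₗ ι).codRestrict Y fun j => by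
      refine sub_eq_zero.2 ?_
      change g (p' 0) = Submodule.Quotient.mk (ι j)
      rw [map_zero, map_zero, eq_comm, Submodule.Quotient.mk_eq_zero]
      exact ⟨j, rfl⟩
    obtain ⟨ρ, hρ⟩ := hJ.out (Y := Y ⧸ xY) (by
        intro a ha y
        obtain ⟨y, rfl⟩ := xY.mkQ_surjective y
        refine smul_eq_zero_of_mem_sup (fun a ha => ?_) ?_ ha
        · rw [← map_smul, show a • y = 0 from Subtype.ext (Prod.ext (Subtype.ext (hF a ha _))
            (hE.killed a ha _)), map_zero]
        · rw [← map_smul]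
          exact (Submodule.Quotient.mk_eq_zero _).2 ⟨y, rfl⟩)
      (xY.mkQ ∘ₗ k) (by
        refine (injective_iff_map_eq_zero _).2 fun j hj => ?_
        obtain ⟨y, hy⟩ := (Submodule.Quotient.mk_eq_zero _).1 hj
        have h1 : x • y.1.1 = 0 := congrArg (fun z : Y => z.1.1) hy
        have h2 : x • y.1.2 = ι j := congrArg (fun z : Y => z.1.2) hy
        have h3 : y.1.1 = 0 := Subtype.ext (hxF _ (congrArg Subtype.val h1))
        have h4 := hY y
        rw [h3, map_zero, map_zero] at h4
        obtain ⟨j', hj'⟩ := (Submodule.Quotient.mk_eq_zero _).1 h4.symm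
        rw [← hj', ← map_smul, hxJ, map_zero] at h2
        exact hι (h2.symm.trans (map_zero ι).symm)) LinearMap.id
    let π : Y →ₗ[Q] A' := LinearMap.fst Q A' E ∘ₗ Y.subtype
    have hπ : Function.Surjective π := fun a => by
      obtain ⟨e, he⟩ := (LinearMap.range ι).mkQ_surjective (g (p' a))
      exact ⟨⟨(a, e), sub_eq_zero.2 he.symm⟩, rfl⟩
    obtain ⟨gt, hgt⟩ := exists_comp_eq_of_surjective π hπ
      (LinearMap.snd Q A' E ∘ₗ Y.subtype - ι ∘ₗ ρ ∘ₗ xY.mkQ) (by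
        intro y hy
        have h4 := hY y
        rw [show y.1.1 = 0 from hy, map_zero, map_zero] at h4
        obtain ⟨j', hj'⟩ := (Submodule.Quotient.mk_eq_zero _).1 h4.symm
        have : y = k j' := Subtype.ext (Prod.ext hy hj'.symm)
        have h5 := hρ j'
        rw [LinearMap.comp_apply, ← this] at h5
        change y.1.2 - ι (ρ (xY.mkQ y)) = 0
        rw [h5, ← hj', LinearMap.id_apply, sub_self])
    have hgt' : ∀ a : A', (LinearMap.range ι).mkQ (gt a) = g (p' a) := fun a => by
      obtain ⟨y, rfl⟩ := hπ a
      have h := LinearMap.congr_fun hgt y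
      change gt (π y) = y.1.2 - ι (ρ (xY.mkQ y)) at h
      rw [h, map_sub, ← hY]
      refine sub_eq_self.2 ?_
      exact (Submodule.Quotient.mk_eq_zero _).2 ⟨_, rfl⟩
    obtain ⟨G, hG⟩ := hE.out hF A'.subtype Subtype.val_injective gt
    obtain ⟨h, hh⟩ := exists_comp_eq_of_surjective p hp ((LinearMap.range ι).mkQ ∘ₗ G) (by
      intro b hb
      have hb' : b ∈ A' := ⟨0, (map_zero f).trans hb.symm⟩
      change (LinearMap.range ι).mkQ (G (A'.subtype ⟨b, hb'⟩)) = 0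
      rw [hG, hgt']
      have : p' ⟨b, hb'⟩ = 0 := hf (by rw [hp', map_zero]; exact hb)
      rw [this, map_zero])
    refine ⟨h, fun a => ?_⟩
    obtain ⟨b, hb⟩ := hp (f a)
    have hb' : b ∈ A' := ⟨a, hb.symm⟩
    rw [← hb]
    refine (LinearMap.congr_fun hh b).trans ?_
    change (LinearMap.range ι).mkQ (G (A'.subtype ⟨b, hb'⟩)) = _
    rw [hG, hgt']
    exact congrArg g (hf (by rw [hp']; exact hb))

/-- Multiplication by `x` induces a split surjection from the `I ⊔ (x)`-torsion of `C ⧸ J` to `J`,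
and its kernel lifts to `C`. -/
lemma RelInj.exists_section {x : Q} (hx : ∀ a, x * a ∈ I → a ∈ I) (hC : RelInj I C)
    (hJ : RelInj (I ⊔ Ideal.span {x}) J) (ε : J →ₗ[Q] C) (hε : Function.Injective ε)
    (T : Submodule Q (C ⧸ LinearMap.range ε))
    (hT : T = Submodule.torsionBySet Q (C ⧸ LinearMap.range ε)
      ((I ⊔ Ideal.span {x} : Ideal Q) : Set Q)) :
    ∃ (σ : T →ₗ[Q] J) (τ : J →ₗ[Q] T) (V : T →ₗ[Q] C),
      (∀ c hc, ε (σ ⟨(LinearMap.range ε).mkQ c, hc⟩) = x • c) ∧ (∀ j, σ (τ j) = j) ∧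
        ∀ u, σ u = 0 → (LinearMap.range ε).mkQ (V u) = u := by
  have hxI : x ∈ I ⊔ Ideal.span {x} := Ideal.mem_sup_right (Ideal.mem_span_singleton_self x)
  have hxJ : ∀ j : J, x • j = 0 := fun j => hJ.killed x hxI j
  have hTk : Killed (I ⊔ Ideal.span {x}) T := by subst hT; exact killed_torsionBySet _ _
  have memT : ∀ c : C, (∃ j, ε j = x • c) → (LinearMap.range ε).mkQ c ∈ T := by
    rintro c ⟨j, hj⟩
    rw [hT]
    refine (Submodule.mem_torsionBySet_iff _ _).2 fun a => ?_
    refine smul_eq_zero_of_mem_sup (fun a ha => hC.killed.quotient _ a ha _) ?_ a.2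
    rw [← map_smul, ← hj]
    exact (Submodule.Quotient.mk_eq_zero _).2 ⟨j, rfl⟩
  let P : Submodule Q C := T.comap (LinearMap.range ε).mkQ
  obtain ⟨σ₀, hσ₀⟩ := exists_comp_eq_of_injective ε hε (LinearMap.lsmul Q C x ∘ₗ P.subtype) (by
    intro c
    have h := congrArg Subtype.val (hTk x hxI ⟨_, c.2⟩)
    change x • (LinearMap.range ε).mkQ c.1 = 0 at h
    rw [← map_smul] at h
    exact (Submodule.Quotient.mk_eq_zero _).1 h)
  let π : P →ₗ[Q] T := ((LinearMap.range ε).mkQ ∘ₗ P.subtype).codRestrict T fun c => c.2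
  have hπ : Function.Surjective π := fun u => by
    obtain ⟨c, hc⟩ := (LinearMap.range ε).mkQ_surjective u.1
    exact ⟨⟨c, by change _ ∈ T; rw [hc]; exact u.2⟩, Subtype.ext hc⟩
  obtain ⟨σ, hσ'⟩ := exists_comp_eq_of_surjective π hπ σ₀ (by
    intro c hc
    obtain ⟨j, hj⟩ := (Submodule.Quotient.mk_eq_zero _).1 (congrArg Subtype.val hc)
    refine hε ((hσ₀ c).trans ?_)
    change x • c.1 = _
    rw [map_zero, ← show ε j = c.1 from hj, ← map_smul, hxJ, map_zero])
  have hσ : ∀ c hc, ε (σ ⟨(LinearMap.range ε).mkQ c, hc⟩) = x • c := fun c hc =>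
    (congrArg ε (LinearMap.congr_fun hσ' ⟨c, hc⟩)).trans (hσ₀ ⟨c, hc⟩)
  have hσs : Function.Surjective σ := fun j => by
    obtain ⟨h, hh⟩ := hC.out (Y := Q ⧸ I) (X := Q ⧸ I) (fun a ha e => by
        obtain ⟨r, rfl⟩ := Ideal.Quotient.mk_surjective e
        exact Ideal.Quotient.eq_zero_iff_mem.2 (I.mul_mem_right r ha))
      (LinearMap.lsmul Q (Q ⧸ I) x) (by
        refine (injective_iff_map_eq_zero _).2 fun e he => ?_
        obtain ⟨r, rfl⟩ := Ideal.Quotient.mk_surjective e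
        exact Ideal.Quotient.eq_zero_iff_mem.2 (hx r (Ideal.Quotient.eq_zero_iff_mem.1 he)))
      (I.liftQ (LinearMap.toSpanSingleton Q C (ε j)) fun a ha => hC.killed a ha _)
    have hc : ε j = x • h 1 := by
      rw [← map_smul]
      exact (one_smul Q (ε j)).symm.trans (hh 1).symm
    exact ⟨⟨_, memT (h 1) ⟨j, hc⟩⟩, hε (by rw [hσ, hc])⟩
  let S := Submodule.torsionBySet Q C ((I ⊔ Ideal.span {x} : Ideal Q) : Set Q)
  have hS : RelInj (I ⊔ Ideal.span {x}) S := hC.torsionBySet le_sup_left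
  let q : S →ₗ[Q] T := ((LinearMap.range ε).mkQ ∘ₗ S.subtype).codRestrict T fun c =>
    memT c.1 ⟨0, by rw [map_zero]; exact (congrArg Subtype.val (hS.killed x hxI c)).symm⟩
  have hσq : ∀ c, σ (q c) = 0 := fun c => hε (by
    rw [map_zero]
    exact (hσ c.1 (q c).2).trans (congrArg Subtype.val (hS.killed x hxI c)))
  let ε' : J →ₗ[Q] S := ε.codRestrict S fun j => (Submodule.mem_torsionBySet_iff _ _).2 fun a => by
    change (a : Q) • ε j = 0
    rw [← map_smul, hJ.killed a a.2, map_zero]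
  obtain ⟨r, hr⟩ := hJ.out hS.killed ε' (fun a b hab => hε (congrArg Subtype.val hab)) LinearMap.id
  obtain ⟨y, hy⟩ := hS.exists_comp_eq hTk q (LinearMap.id - ε' ∘ₗ r) (by
    intro c hc
    obtain ⟨j, hj⟩ := (Submodule.Quotient.mk_eq_zero _).1 (congrArg Subtype.val hc)
    obtain rfl : ε' j = c := Subtype.ext hj
    change ε' j - ε' (r (ε' j)) = 0
    rw [hr, LinearMap.id_apply, sub_self])
  have hqy : ∀ u, σ u = 0 → q (y u) = u := by
    intro u hu
    obtain ⟨⟨c, hc⟩, rfl⟩ := hπ u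
    have hxc : x • c = 0 := by rw [← hσ c hc]; exact (congrArg ε hu).trans (map_zero ε)
    have hcS : c ∈ S := (Submodule.mem_torsionBySet_iff _ _).2 fun a =>
      smul_eq_zero_of_mem_sup (fun a ha => hC.killed a ha _) hxc a.2
    have h1 : q ⟨c, hcS⟩ = π ⟨c, hc⟩ := rfl
    rw [← h1, hy]
    refine Subtype.ext ?_
    change (LinearMap.range ε).mkQ (c - ε (r ⟨c, hcS⟩)) = (LinearMap.range ε).mkQ c
    rw [map_sub, sub_eq_self]
    exact (Submodule.Quotient.mk_eq_zero _).2 ⟨_, rfl⟩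
  obtain ⟨τ, hτ⟩ := exists_comp_eq_of_surjective σ hσs (LinearMap.id - q ∘ₗ y) fun u hu => by
    change u - q (y u) = 0
    rw [hqy u hu, sub_self]
  refine ⟨σ, τ, S.subtype ∘ₗ y, hσ, fun j => ?_, fun u hu => congrArg Subtype.val (hqy u hu)⟩
  obtain ⟨u, rfl⟩ := hσs j
  have h := LinearMap.congr_fun hτ u
  change τ (σ u) = u - q (y u) at h
  rw [h, map_sub, hσq, sub_zero]

end RelInj

namespace Cpx

variable {Q : Type u} [CommRing Q]

section Quotient

variable (J : Cpx Q) (E : ℕ → ModuleCat.{u} Q) (ι : ∀ n, J.X n →ₗ[Q] E n)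

/-- The embedding of a complex in a contractible complex. -/
def emb (n : ℕ) : J.X n →ₗ[Q] E n × E (n + 1) := (ι n).prod (ι (n + 1) ∘ₗ J.d n)

/-- The differential of the contractible complex with terms `E n × E (n + 1)`. -/
def contrD (E : ℕ → ModuleCat.{u} Q) (n : ℕ) : E n × E (n + 1) →ₗ[Q] E (n + 1) × E (n + 1 + 1) :=
  LinearMap.inl Q (E (n + 1)) (E (n + 1 + 1)) ∘ₗ LinearMap.snd Q (E n) (E (n + 1))

lemma contrD_emb (n : ℕ) (j : J.X n) :
    contrD E n (J.emb E ι n j) = J.emb E ι (n + 1) (J.d n j) := by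
  refine Prod.ext rfl ?_
  change 0 = ι (n + 1 + 1) (J.d (n + 1) (J.d n j))
  rw [J.d_d, map_zero]

/-- The quotient of a contractible complex by an embedded complex. -/
def contrQuot : Cpx Q where
  X n := (E n × E (n + 1)) ⧸ LinearMap.range (J.emb E ι n)
  d n := Submodule.mapQ _ _ (contrD E n) (by
    rintro _ ⟨j, rfl⟩
    exact ⟨J.d n j, (J.contrD_emb E ι n j).symm⟩)
  d_d n x := by
    obtain ⟨c, rfl⟩ := Submodule.mkQ_surjective _ x
    exact (Submodule.Quotient.mk_eq_zero _).2 ⟨0, map_zero _⟩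

/-- The projection to the quotient of the contractible complex. -/
def contrMk (n : ℕ) : E n × E (n + 1) →ₗ[Q] (J.contrQuot E ι).X n :=
  (LinearMap.range (J.emb E ι n)).mkQ

variable {E ι}

lemma contrMk_surjective (n : ℕ) : Function.Surjective (J.contrMk E ι n) :=
  Submodule.mkQ_surjective _

lemma contrMk_eq_zero {n : ℕ} {c : E n × E (n + 1)} :
    J.contrMk E ι n c = 0 ↔ ∃ j, J.emb E ι n j = c :=
  Submodule.Quotient.mk_eq_zero _

lemma contrMk_emb {n : ℕ} (j : J.X n) : J.contrMk E ι n (J.emb E ι n j) = 0 :=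
  J.contrMk_eq_zero.2 ⟨j, rfl⟩

lemma d_contrMk (n : ℕ) (c : E n × E (n + 1)) :
    (J.contrQuot E ι).d n (J.contrMk E ι n c) = J.contrMk E ι (n + 1) (contrD E n c) := rfl

lemma emb_injective (hι : ∀ n, Function.Injective (ι n)) (n : ℕ) :
    Function.Injective (J.emb E ι n) := fun _ _ h => hι n (congrArg Prod.fst h)

lemma exactAt_succ_of_contrQuot (hι : ∀ n, Function.Injective (ι n)) {n : ℕ}
    (H : (J.contrQuot E ι).ExactAt n) : J.ExactAt (n + 1) := by
  intro j hj
  have hc : contrD E n (0, ι (n + 1) j) = J.emb E ι (n + 1) j := by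
    refine Prod.ext rfl ?_
    change 0 = ι (n + 1 + 1) (J.d (n + 1) j)
    rw [hj, map_zero]
  have h := H (J.contrMk E ι n (0, ι (n + 1) j)) (by rw [d_contrMk, hc, contrMk_emb])
  obtain ⟨c, hc0, hc1⟩ : ∃ c, contrD E n c = 0 ∧ J.contrMk E ι n ((0, ι (n + 1) j) - c) = 0 := by
    cases n with
    | zero => exact ⟨0, map_zero _, by rw [sub_zero]; exact h⟩
    | succ n =>
      obtain ⟨y, hy⟩ := h
      obtain ⟨c, rfl⟩ := J.contrMk_surjective n y
      rw [d_contrMk] at hy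
      exact ⟨contrD E n c, rfl, by rw [map_sub, hy, sub_self]⟩
  obtain ⟨k, hk⟩ := J.contrMk_eq_zero.1 hc1
  refine ⟨k, J.emb_injective hι (n + 1) ?_⟩
  rw [← contrD_emb, hk, map_sub, hc0, sub_zero, hc]

lemma contrMk_inl_mem_B (n : ℕ) (a : E (n + 1)) :
    J.contrMk E ι (n + 1) (a, 0) ∈ (J.contrQuot E ι).B (n + 1) :=
  ⟨J.contrMk E ι n (0, a), rfl⟩

lemma contrQuot_finAt [IsNoetherianRing Q] (hι : ∀ n, Function.Injective (ι n)) {n : ℕ}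
    (H : J.FinAt (n + 1 + 1)) : (J.contrQuot E ι).FinAt (n + 1) := by
  let θ : J.X (n + 1 + 1) →ₗ[Q] (J.contrQuot E ι).X (n + 1) := J.contrMk E ι (n + 1) ∘ₗ
    LinearMap.inr Q (E (n + 1)) (E (n + 1 + 1)) ∘ₗ ι (n + 1 + 1)
  let g : (J.X (n + 1 + 1) ⧸ J.B (n + 1 + 1)) →ₗ[Q]
      ((J.contrQuot E ι).X (n + 1) ⧸ (J.contrQuot E ι).B (n + 1)) :=
    Submodule.mapQ _ _ θ (by
      rintro _ ⟨k, rfl⟩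
      have h1 : θ (J.d (n + 1) k) =
          J.contrMk E ι (n + 1) (J.emb E ι (n + 1) k - (ι (n + 1) k, 0)) := by
        refine congrArg (J.contrMk E ι (n + 1)) (Prod.ext ?_ ?_)
        · exact (sub_self _).symm
        · exact (sub_zero _).symm
      change θ (J.d (n + 1) k) ∈ (J.contrQuot E ι).B (n + 1)
      rw [h1, map_sub, contrMk_emb, zero_sub]
      exact neg_mem (J.contrMk_inl_mem_B n _))
  refine (Submodule.FG.map g H).of_le ?_
  rintro _ ⟨z, hz, rfl⟩
  obtain ⟨⟨a, b⟩, rfl⟩ := J.contrMk_surjective (n + 1) z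
  obtain ⟨j, hj⟩ := J.contrMk_eq_zero.1 ((J.d_contrMk (n + 1) (a, b)).symm.trans hz)
  have h1 : ι (n + 1 + 1) j = b := congrArg Prod.fst hj
  have h2 : ι (n + 1 + 1 + 1) (J.d (n + 1 + 1) j) = 0 := congrArg Prod.snd hj
  refine ⟨(J.B (n + 1 + 1)).mkQ j, ⟨j, hι _ (h2.trans (map_zero _).symm), rfl⟩, ?_⟩
  refine (Submodule.Quotient.eq _).2 ?_
  change J.contrMk E ι (n + 1) (0, ι (n + 1 + 1) j) - J.contrMk E ι (n + 1) (a, b) ∈ _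
  rw [h1, ← map_sub, show ((0, b) : E (n + 1) × E (n + 1 + 1)) - (a, b) = (-a, 0) from
    Prod.ext (zero_sub a) (sub_self b)]
  exact J.contrMk_inl_mem_B n _

variable {I : Ideal Q} {x : Q}

lemma contrQuot_hom_exactAt (hx : ∀ a, x * a ∈ I → a ∈ I) (hι : ∀ n, Function.Injective (ι n))
    (hE : ∀ n, RelInj I (E n)) (hJ : ∀ n, RelInj (I ⊔ Ideal.span {x}) (J.X n))
    {N : Type u} [AddCommGroup N] [Module Q N] (hN : Killed (I ⊔ Ideal.span {x}) N) {n : ℕ}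
    (H₁ : (J.hom N).ExactAt (n + 1)) (H₂ : (J.hom N).ExactAt (n + 1 + 1)) :
    ((J.contrQuot E ι).hom N).ExactAt (n + 1) := by
  intro (φ : N →ₗ[Q] (J.contrQuot E ι).X (n + 1)) hφ
  replace hφ : ∀ y, (J.contrQuot E ι).d (n + 1) (φ y) = 0 := LinearMap.congr_fun hφ
  obtain ⟨T, hT⟩ : ∃ T : ∀ m, Submodule Q ((J.contrQuot E ι).X m), ∀ m, T m =
      Submodule.torsionBySet Q ((J.contrQuot E ι).X m) ((I ⊔ Ideal.span {x} : Ideal Q) : Set Q) :=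
    ⟨_, fun _ => rfl⟩
  have hsec : ∀ m, ∃ (σ : T m →ₗ[Q] J.X m) (τ : J.X m →ₗ[Q] T m)
      (V : T m →ₗ[Q] E m × E (m + 1)),
      (∀ c hc, J.emb E ι m (σ ⟨J.contrMk E ι m c, hc⟩) = x • c) ∧ (∀ j, σ (τ j) = j) ∧
        ∀ u : T m, σ u = 0 → J.contrMk E ι m (V u) = u := fun m =>
    RelInj.exists_section hx ((hE m).prod (hE (m + 1))) (hJ m)
      (J.emb E ι m) (J.emb_injective hι m) (T m) (hT m)
  choose σ τ V hσ hτ hV using hsec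
  have memT : ∀ m (u : (J.contrQuot E ι).X m),
      u ∈ T m ↔ ∀ a : ((I ⊔ Ideal.span {x} : Ideal Q) : Set Q), (a : Q) • u = 0 := fun m u => by
    rw [hT]
    exact Submodule.mem_torsionBySet_iff _ _
  have inT : ∀ m (ψ : N →ₗ[Q] (J.contrQuot E ι).X m) y, ψ y ∈ T m := fun m ψ y =>
    (memT _ _).2 fun a => by
      rw [← map_smul, hN a a.2, map_zero]
  have dT : ∀ m (u : T m), (J.contrQuot E ι).d m u ∈ T (m + 1) := fun m u =>
    (memT _ _).2 fun a => by
      rw [← map_smul, show (a : Q) • (u : (J.contrQuot E ι).X m) = 0 from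
        (memT _ _).1 u.2 a, map_zero]
  have dσ : ∀ m (u : T m), σ (m + 1) ⟨_, dT m u⟩ = J.d m (σ m u) := by
    rintro m ⟨u, hu⟩
    obtain ⟨c, rfl⟩ := J.contrMk_surjective m u
    refine J.emb_injective hι (m + 1) ?_
    refine (hσ (m + 1) (contrD E m c) (dT m ⟨_, hu⟩)).trans ?_
    rw [← contrD_emb, ← map_smul]
    exact congrArg (contrD E m) (hσ m c hu).symm
  let φT : N →ₗ[Q] T (n + 1) := φ.codRestrict _ (inT _ φ)
  obtain ⟨(β : N →ₗ[Q] J.X n), hβ⟩ := H₁ (σ (n + 1) ∘ₗ φT) (LinearMap.ext fun y => by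
    change J.d (n + 1) (σ (n + 1) (φT y)) = 0
    rw [← dσ]
    have h0 : (⟨_, dT (n + 1) (φT y)⟩ : T (n + 1 + 1)) = 0 := Subtype.ext (hφ y)
    rw [h0, map_zero])
  replace hβ : ∀ y, J.d n (β y) = σ (n + 1) (φT y) := LinearMap.congr_fun hβ
  let d₀ : N →ₗ[Q] (J.contrQuot E ι).X n := (T n).subtype ∘ₗ τ n ∘ₗ β
  let φ' : N →ₗ[Q] (J.contrQuot E ι).X (n + 1) := φ - (J.contrQuot E ι).d n ∘ₗ d₀
  let φT' : N →ₗ[Q] T (n + 1) := φ'.codRestrict _ (inT _ φ')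
  have hσφ : ∀ y, σ (n + 1) (φT' y) = 0 := fun y => by
    have : φT' y = φT y - ⟨_, dT n (τ n (β y))⟩ := rfl
    rw [this, map_sub, dσ, hτ, hβ, sub_self]
  let γ : N →ₗ[Q] E (n + 1) × E (n + 1 + 1) := V (n + 1) ∘ₗ φT'
  have hγ : ∀ y, J.contrMk E ι (n + 1) (γ y) = φ' y := fun y => hV (n + 1) _ (hσφ y)
  have hdφ' : ∀ y, (J.contrQuot E ι).d (n + 1) (φ' y) = 0 := fun y => by
    change (J.contrQuot E ι).d (n + 1) (φ y - (J.contrQuot E ι).d n (d₀ y)) = 0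
    rw [map_sub, hφ, Cpx.d_d, sub_zero]
  obtain ⟨δ, hδ⟩ := exists_comp_eq_of_injective (J.emb E ι (n + 1 + 1))
    (J.emb_injective hι _) (contrD E (n + 1) ∘ₗ γ) fun y => by
      refine J.contrMk_eq_zero.1 ?_
      rw [LinearMap.comp_apply, ← d_contrMk, hγ, hdφ']
  obtain ⟨(κ : N →ₗ[Q] J.X (n + 1)), hκ⟩ := H₂ δ (LinearMap.ext fun y => by
    refine J.emb_injective hι _ ?_
    change J.emb E ι _ (J.d (n + 1 + 1) (δ y)) = J.emb E ι _ 0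
    rw [← contrD_emb, hδ, map_zero]
    rfl)
  replace hκ : ∀ y, J.d (n + 1) (κ y) = δ y := LinearMap.congr_fun hκ
  let γ' : N →ₗ[Q] E (n + 1) × E (n + 1 + 1) := γ - J.emb E ι (n + 1) ∘ₗ κ
  have hγ' : ∀ y, contrD E (n + 1) (γ' y) = 0 := fun y => by
    change contrD E (n + 1) (γ y - J.emb E ι (n + 1) (κ y)) = 0
    rw [map_sub, contrD_emb, hκ, hδ]
    exact sub_self _
  have hmk : ∀ y, J.contrMk E ι (n + 1) (γ' y) = φ' y := fun y => by
    change J.contrMk E ι (n + 1) (γ y - J.emb E ι (n + 1) (κ y)) = φ' y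
    rw [map_sub, contrMk_emb, sub_zero, hγ]
  refine ⟨d₀ + J.contrMk E ι n ∘ₗ LinearMap.inr Q (E n) (E (n + 1)) ∘ₗ
    LinearMap.fst Q _ _ ∘ₗ γ', LinearMap.ext fun y => ?_⟩
  change (J.contrQuot E ι).d n (d₀ y + J.contrMk E ι n (0, (γ' y).1)) = φ y
  have h1 : contrD E n (0, (γ' y).1) = γ' y :=
    Prod.ext rfl (congrArg Prod.fst (hγ' y)).symm
  rw [map_add, d_contrMk, h1, hmk]
  exact add_sub_cancel _ _

end Quotient

/-- Passing from a complex of relative injectives modulo `I ⊔ (x)` to one of relative injectives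
modulo `I`. -/
lemma exists_relInj_of_sup [IsNoetherianRing Q] {I : Ideal Q} {x : Q}
    (hx : ∀ a, x * a ∈ I → a ∈ I) (J : Cpx Q)
    (hJ : ∀ n, RelInj (I ⊔ Ideal.span {x}) (J.X n)) {N : Type u} [AddCommGroup N] [Module Q N]
    (hN : Killed (I ⊔ Ideal.span {x}) N) (hNJ : (J.hom N).EvExact) (hfin : J.EvFin) :
    ∃ J' : Cpx Q, (∀ n, RelInj I (J'.X n)) ∧ (J'.hom N).EvExact ∧ J'.EvFin ∧
      (J'.EvExact → J.EvExact) := by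
  have := fun n => exists_relInj I ((hJ n).killed.mono le_sup_left)
  choose E ι hE hι using this
  refine ⟨J.contrQuot E ι, fun n => ?_, ?_, ?_, ?_⟩
  · exact RelInj.quotient hx ((hE n).prod (hE (n + 1))) (hJ n) _ (J.emb_injective hι n)
  · obtain ⟨m, hm⟩ := hNJ
    refine ⟨m + 1, fun n hn => ?_⟩
    obtain ⟨n, rfl⟩ : ∃ k, n = k + 1 := ⟨n - 1, by omega⟩
    exact J.contrQuot_hom_exactAt hx hι hE hJ hN (hm _ (by omega)) (hm _ (by omega))
  · obtain ⟨m, hm⟩ := hfin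
    refine ⟨m + 1, fun n hn => ?_⟩
    obtain ⟨n, rfl⟩ : ∃ k, n = k + 1 := ⟨n - 1, by omega⟩
    exact J.contrQuot_finAt hι (hm _ (by omega))
  · rintro ⟨m, hm⟩
    refine ⟨m + 1, fun n hn => ?_⟩
    obtain ⟨n, rfl⟩ : ∃ k, n = k + 1 := ⟨n - 1, by omega⟩
    exact J.exactAt_succ_of_contrQuot hι (hm _ (by omega))

/-- Passing from a complex of injectives modulo a regular sequence to a complex of injectives. -/
lemma exists_injective_of_isWeaklyRegular [IsNoetherianRing Q] (f : List Q)
    (hf : RingTheory.Sequence.IsWeaklyRegular Q f) (J : Cpx Q)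
    (hJ : ∀ n, RelInj (Ideal.ofList f) (J.X n)) {N : Type u} [AddCommGroup N] [Module Q N]
    (hN : Killed (Ideal.ofList f) N) (hNJ : (J.hom N).EvExact) (hfin : J.EvFin) :
    ∃ J' : Cpx Q, (∀ n, Module.Injective Q (J'.X n)) ∧ (J'.hom N).EvExact ∧ J'.EvFin ∧
      (J'.EvExact → J.EvExact) := by
  induction f using List.reverseRecOn generalizing J with
  | nil =>
    rw [Ideal.ofList_nil] at hJ
    exact ⟨J, fun n => (hJ n).injective, hNJ, hfin, id⟩
  | append_singleton f x ih =>
    rw [Ideal.ofList_append, Ideal.ofList_singleton] at hJ hN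
    rw [RingTheory.Sequence.isWeaklyRegular_append_iff,
      RingTheory.Sequence.isWeaklyRegular_singleton_iff] at hf
    have hx : ∀ a, x * a ∈ Ideal.ofList f → a ∈ Ideal.ofList f := fun a ha => by
      have key : (Submodule.Quotient.mk a : Q ⧸ (Ideal.ofList f • ⊤ : Submodule Q Q)) = 0 := by
        refine hf.2 ?_
        change x • _ = x • _
        rw [smul_zero, ← Submodule.Quotient.mk_smul, Submodule.Quotient.mk_eq_zero]
        simpa using ha
      rw [Submodule.Quotient.mk_eq_zero] at key
      simpa using key
    obtain ⟨J₁, h₁, h₂, h₃, h₄⟩ := exists_relInj_of_sup hx J hJ hN hNJ hfin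
    obtain ⟨J₂, k₁, k₂, k₃, k₄⟩ := ih hf.1 J₁ h₁ (hN.mono le_sup_left) h₂ h₃
    exact ⟨J₂, k₁, k₂, k₃, h₄ ∘ k₄⟩

end Cpx

namespace Cpx

open RingTheory.Sequence
open scoped Pointwise

variable {R : Type u} [CommRing R] {A A' B : Type u} [AddCommGroup A] [Module R A]
  [AddCommGroup A'] [Module R A'] [AddCommGroup B] [Module R B]

section Equiv

variable {J K : Cpx R} (e : ∀ n, J.X n ≃ₗ[R] K.X n)
  (he : ∀ n x, e (n + 1) (J.d n x) = K.d n (e n x))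

include he

lemma apply_mem_B {n : ℕ} {x : J.X n} (hx : x ∈ J.B n) : e n x ∈ K.B n := by
  cases n with
  | zero => obtain rfl : x = 0 := hx; rw [map_zero]; exact zero_mem _
  | succ n => obtain ⟨y, rfl⟩ := hx; exact ⟨e n y, (he n y).symm⟩

lemma exists_cocycle_of_equiv {n : ℕ} (y : K.X n) (hy : K.d n y = 0) :
    ∃ x, J.d n x = 0 ∧ e n x = y := by
  obtain ⟨x, rfl⟩ := (e n).surjective y
  refine ⟨x, (e (n + 1)).injective ?_, rfl⟩
  rw [he, hy, map_zero]

lemma ExactAt.of_equiv {n : ℕ} (H : J.ExactAt n) : K.ExactAt n := by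
  intro y hy
  obtain ⟨x, hx, rfl⟩ := exists_cocycle_of_equiv e he y hy
  exact apply_mem_B e he (H x hx)

lemma FinAt.of_equiv {n : ℕ} (H : J.FinAt n) : K.FinAt n := by
  let g : (J.X n ⧸ J.B n) →ₗ[R] (K.X n ⧸ K.B n) :=
    Submodule.mapQ _ _ (e n).toLinearMap fun x hx => apply_mem_B e he hx
  have : (K.Z n).map (K.B n).mkQ = ((J.Z n).map (J.B n).mkQ).map g := by
    ext z
    constructor
    · rintro ⟨y, hy, rfl⟩
      obtain ⟨x, hx, rfl⟩ := exists_cocycle_of_equiv e he y hy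
      exact ⟨_, ⟨x, hx, rfl⟩, rfl⟩
    · rintro ⟨_, ⟨x, hx, rfl⟩, rfl⟩
      refine ⟨e n x, ?_, rfl⟩
      change K.d n (e n x) = 0
      rw [← he, show J.d n x = 0 from hx, map_zero]
  rw [FinAt, this]
  exact Submodule.FG.map g H

end Equiv

lemma ExactAt.hom_congr {J : Cpx R} {n : ℕ} (H : (J.hom A).ExactAt n) (f : B ≃ₗ[R] A) :
    (J.hom B).ExactAt n :=
  ExactAt.of_equiv (J := J.hom A) (K := J.hom B) (fun n => LinearEquiv.congrLeft (J.X n) R f.symm)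
    (fun _ _ => rfl) H

lemma EvExact.hom_congr {J : Cpx R} (H : (J.hom A).EvExact) (f : B ≃ₗ[R] A) :
    (J.hom B).EvExact :=
  H.imp fun _ hm n hn => (hm n hn).hom_congr f

/-- Exactness along the connecting homomorphism. -/
lemma hom_exactAt_succ (J : Cpx R) [∀ n, Module.Injective R (J.X n)]
    (i : A' →ₗ[R] B) (π : B →ₗ[R] A) (hi : Function.Injective i) (hπ : Function.Surjective π)
    (hiπ : ∀ b, π b = 0 ↔ ∃ a, i a = b) {n : ℕ} (hA' : (J.hom A').ExactAt n)
    (hB : (J.hom B).ExactAt (n + 1)) : (J.hom A).ExactAt (n + 1) := by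
  intro (x : A →ₗ[R] J.X (n + 1)) hx
  replace hx : ∀ a, J.d (n + 1) (x a) = 0 := LinearMap.congr_fun hx
  obtain ⟨(β : B →ₗ[R] J.X n), hβ⟩ := hB (x ∘ₗ π) (LinearMap.ext fun b => hx (π b))
  replace hβ : ∀ b, J.d n (β b) = x (π b) := LinearMap.congr_fun hβ
  have h := hA' (β ∘ₗ i) (LinearMap.ext fun a => by
    change J.d n (β (i a)) = 0
    rw [hβ, (hiπ _).2 ⟨a, rfl⟩, map_zero])
  obtain ⟨β', h₁, h₂⟩ : ∃ β' : B →ₗ[R] J.X n, (∀ b, J.d n (β' b) = 0) ∧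
      ∀ a, β (i a) = β' (i a) := by
    cases n with
    | zero => exact ⟨0, fun b => map_zero _, LinearMap.congr_fun h⟩
    | succ n =>
      obtain ⟨(γ : A' →ₗ[R] J.X n), hγ⟩ := h
      obtain ⟨γ', hγ'⟩ := exists_comp_eq_of_injective_module i γ fun a ha => by
        rw [hi (ha.trans (map_zero i).symm), map_zero]
      refine ⟨J.d n ∘ₗ γ', fun b => J.d_d n _, fun a => ?_⟩
      exact (LinearMap.congr_fun hγ a).symm.trans
        (congrArg (J.d n) (LinearMap.congr_fun hγ' a).symm)
  obtain ⟨y, hy⟩ := exists_comp_eq_of_surjective π hπ (β - β') fun b hb => by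
    obtain ⟨a, rfl⟩ := (hiπ b).1 hb
    rw [LinearMap.sub_apply, h₂, sub_self]
  refine ⟨y, LinearMap.ext fun a => ?_⟩
  obtain ⟨b, rfl⟩ := hπ a
  change J.d n (y (π b)) = x (π b)
  rw [show y (π b) = (β - β') b from LinearMap.congr_fun hy b, LinearMap.sub_apply, map_sub, hβ,
    h₁, sub_zero]

lemma quotSMulTop_mk_eq_zero (x : R) (b : A) :
    (Submodule.mkQ (x • ⊤ : Submodule R A)) b = 0 ↔ ∃ a, LinearMap.lsmul R A x a = b := by
  rw [Submodule.mkQ_apply, Submodule.Quotient.mk_eq_zero, Submodule.mem_smul_pointwise_iff_exists]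
  simp

lemma evExact_hom_quotSMulTop (J : Cpx R) [∀ n, Module.Injective R (J.X n)] {x : R}
    (hx : IsSMulRegular A x) (H : (J.hom A).EvExact) : (J.hom (QuotSMulTop x A)).EvExact := by
  obtain ⟨m, hm⟩ := H
  refine ⟨m + 1, fun n hn => ?_⟩
  obtain ⟨n, rfl⟩ : ∃ k, n = k + 1 := ⟨n - 1, by omega⟩
  exact J.hom_exactAt_succ (LinearMap.lsmul R A x) (Submodule.mkQ _) hx
    (Submodule.mkQ_surjective _) (quotSMulTop_mk_eq_zero x) (hm n (by omega)) (hm _ (by omega))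

lemma evFin_hom_quotSMulTop [IsNoetherianRing R] (J : Cpx R) [∀ n, Module.Injective R (J.X n)]
    {x : R} (hx : IsSMulRegular A x) (H : (J.hom A).EvFin) :
    (J.hom (QuotSMulTop x A)).EvFin := by
  obtain ⟨m, hm⟩ := H
  refine ⟨m + 1, fun n hn => ?_⟩
  obtain ⟨n, rfl⟩ : ∃ k, n = k + 1 := ⟨n - 1, by omega⟩
  exact J.finAt_hom_succ (LinearMap.lsmul R A x) (Submodule.mkQ _) hx
    (Submodule.mkQ_surjective _) (quotSMulTop_mk_eq_zero x) (hm n (by omega)) (hm _ (by omega))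

/-- Eventual exactness passes to the quotient by a regular sequence. -/
lemma evExact_hom_quotient (J : Cpx R) [∀ n, Module.Injective R (J.X n)] (rs : List R)
    (hrs : IsWeaklyRegular A rs) (H : (J.hom A).EvExact) :
    (J.hom (A ⧸ (Ideal.ofList rs • ⊤ : Submodule R A))).EvExact := by
  induction rs generalizing A with
  | nil =>
    refine H.hom_congr (Submodule.quotEquivOfEqBot _ ?_)
    rw [Ideal.ofList_nil, Submodule.bot_smul]
  | cons x rs ih =>
    rw [isWeaklyRegular_cons_iff] at hrs
    exact (ih hrs.2 (J.evExact_hom_quotSMulTop hrs.1 H)).hom_congr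
      (Submodule.quotOfListConsSMulTopEquivQuotSMulTopInner A x rs)

lemma exists_smul_eq_cocycle (J : Cpx R) {n : ℕ} [Module.Injective R (J.X n)] {x : R}
    (hx : IsSMulRegular A x) (H : (J.hom (QuotSMulTop x A)).ExactAt (n + 1)) (φ : A →ₗ[R] J.X n)
    (hφ : ∀ a, J.d n (φ a) = 0) :
    ∃ ψ : A →ₗ[R] J.X n, (∀ a, J.d n (ψ a) = 0) ∧ x • ψ = φ := by
  obtain ⟨ψ, hψ⟩ := exists_comp_eq_of_injective_module (LinearMap.lsmul R A x) φ fun a ha => by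
    rw [show a = 0 from hx (ha.trans (smul_zero x).symm), map_zero]
  replace hψ : ∀ a, ψ (x • a) = φ a := LinearMap.congr_fun hψ
  let π : A →ₗ[R] QuotSMulTop x A := Submodule.mkQ _
  have hπ : Function.Surjective π := Submodule.mkQ_surjective _
  have hπx : ∀ a, π (x • a) = 0 := fun a => (quotSMulTop_mk_eq_zero x _).2 ⟨a, rfl⟩
  obtain ⟨θ, hθ⟩ := exists_comp_eq_of_surjective π hπ (J.d n ∘ₗ ψ) fun b hb => by
    obtain ⟨a, rfl⟩ := (quotSMulTop_mk_eq_zero x b).1 hb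
    change J.d n (ψ (x • a)) = 0
    rw [hψ, hφ]
  replace hθ : ∀ a, θ (π a) = J.d n (ψ a) := LinearMap.congr_fun hθ
  obtain ⟨(κ : QuotSMulTop x A →ₗ[R] J.X n), hκ⟩ := H θ (LinearMap.ext fun b => by
    obtain ⟨a, rfl⟩ := hπ b
    change J.d (n + 1) (θ (π a)) = 0
    rw [hθ, J.d_d])
  replace hκ : ∀ b, J.d n (κ b) = θ b := LinearMap.congr_fun hκ
  refine ⟨ψ - κ ∘ₗ π, fun a => ?_, LinearMap.ext fun a => ?_⟩
  · change J.d n (ψ a - κ (π a)) = 0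
    rw [map_sub, hκ, hθ, sub_self]
  · rw [LinearMap.smul_apply, ← map_smul]
    change ψ (x • a) - κ (π (x • a)) = φ a
    rw [hπx, map_zero, sub_zero, hψ]

/-- Nakayama: eventual exactness modulo an element of the radical. -/
lemma evExact_hom_of_quotSMulTop [IsNoetherianRing R] (J : Cpx R)
    [∀ n, Module.Injective R (J.X n)] {x : R} (hx : IsSMulRegular A x)
    (hxj : x ∈ Ideal.jacobson (⊥ : Ideal R)) (hfin : (J.hom A).EvFin)
    (H : (J.hom (QuotSMulTop x A)).EvExact) : (J.hom A).EvExact := by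
  obtain ⟨m, hm⟩ := hfin
  obtain ⟨m', hm'⟩ := H
  refine ⟨max m m', fun n hn => ?_⟩
  have key : ((J.hom A).Z n).map ((J.hom A).B n).mkQ = ⊥ := by
    refine Submodule.eq_bot_of_le_smul_of_le_jacobson_bot (Ideal.span {x}) _ (hm n (by omega)) ?_
      ((Ideal.span_singleton_le_iff_mem _).2 hxj)
    rintro _ ⟨φ, hφ, rfl⟩
    obtain ⟨(ψ : (J.hom A).X n), hψ, h⟩ := J.exists_smul_eq_cocycle hx (hm' (n + 1) (by omega)) φ
      (LinearMap.congr_fun hφ)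
    replace h : x • ψ = φ := h
    rw [← h, map_smul]
    exact Submodule.smul_mem_smul (Ideal.mem_span_singleton_self x) ⟨ψ, LinearMap.ext hψ, rfl⟩
  intro φ hφ
  have h : ((J.hom A).B n).mkQ φ ∈ ((J.hom A).Z n).map ((J.hom A).B n).mkQ := ⟨φ, hφ, rfl⟩
  rw [key] at h
  exact (Submodule.Quotient.mk_eq_zero _).1 h

/-- Nakayama: eventual exactness modulo a regular sequence in the radical. -/
lemma evExact_hom_of_quotient [IsNoetherianRing R] (J : Cpx R) [∀ n, Module.Injective R (J.X n)]
    (rs : List R) (hrs : IsWeaklyRegular A rs) (hj : ∀ r ∈ rs, r ∈ Ideal.jacobson (⊥ : Ideal R))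
    (hfin : (J.hom A).EvFin) (H : (J.hom (A ⧸ (Ideal.ofList rs • ⊤ : Submodule R A))).EvExact) :
    (J.hom A).EvExact := by
  induction rs generalizing A with
  | nil =>
    refine H.hom_congr (Submodule.quotEquivOfEqBot _ ?_).symm
    rw [Ideal.ofList_nil, Submodule.bot_smul]
  | cons x rs ih =>
    rw [isWeaklyRegular_cons_iff] at hrs
    refine J.evExact_hom_of_quotSMulTop hrs.1 (hj x List.mem_cons_self) hfin ?_
    exact ih hrs.2 (fun r hr => hj r (List.mem_cons_of_mem x hr))
      (J.evFin_hom_quotSMulTop hrs.1 hfin)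
      (H.hom_congr (Submodule.quotOfListConsSMulTopEquivQuotSMulTopInner A x rs).symm)

lemma exists_surjective_residueField [IsLocalRing R] [Module.Finite R A] [Nontrivial A] :
    ∃ π : A →ₗ[R] R ⧸ IsLocalRing.maximalIdeal R, Function.Surjective π := by
  obtain ⟨S, hS⟩ := IsCoatomic.exists_coatom (Submodule R A)
  obtain ⟨I, hI, ⟨e⟩⟩ := isSimpleModule_iff_quot_maximal.1 (isSimpleModule_iff_isCoatom.2 hS)
  obtain rfl := IsLocalRing.eq_maximalIdeal hI
  exact ⟨e.toLinearMap ∘ₗ S.mkQ, e.surjective.comp S.mkQ_surjective⟩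

/-- Exactness of `Hom(k, Hom(G, J))` forces exactness of `Hom(k, J)`. -/
lemma hom_exactAt_of_homB_tot {G : Chn R} (hG : G.Resolves A) (J : Cpx R) {I : Ideal R}
    (π : A →ₗ[R] R ⧸ I) (hπ : Function.Surjective π) {n : ℕ}
    (H : ((G.homB J).tot.hom (R ⧸ I)).ExactAt (n + 1)) : (J.hom (R ⧸ I)).ExactAt (n + 1) := by
  intro (e : (R ⧸ I) →ₗ[R] J.X (n + 1)) he
  replace he : ∀ c, J.d (n + 1) (e c) = 0 := LinearMap.congr_fun he
  let a := Chn.homBAug hG J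
  let x : (R ⧸ I) →ₗ[R] (J.hom A).X (n + 1) := ((LinearMap.mul R (R ⧸ I)).compr₂ e).compl₂ π
  obtain ⟨(ψ : (R ⧸ I) →ₗ[R] (G.homB J).TotX n), hψ⟩ := H (a.toTot (n + 1) ∘ₗ x)
    (LinearMap.ext fun c => by
      change (G.homB J).totD (n + 1) (a.toTot (n + 1) (x c)) = 0
      rw [a.totD_toTot, show (J.hom A).d (n + 1) (x c) = 0 from LinearMap.ext fun y => he _,
        map_zero])
  replace hψ : ∀ c, (G.homB J).totD n (ψ c) = a.toTot (n + 1) (x c) := LinearMap.congr_fun hψ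
  obtain ⟨y, hy⟩ := hπ 1
  obtain ⟨g, rfl⟩ := hG.surj y
  let ev : (G.X 0 →ₗ[R] J.X n) →ₗ[R] J.X n := LinearMap.applyₗ g
  refine ⟨ev ∘ₗ (G.homB J).cmp 0 n (zero_add n) ∘ₗ ψ, LinearMap.ext fun c => ?_⟩
  have h := congrArg ((G.homB J).cmp 0 (n + 1) (zero_add _)) (hψ c)
  rw [Bicpx.cmp_totD_zero_succ, Bicpx.Aug.toTot, LinearMap.comp_apply,
    Bicpx.cmp_single_self] at h
  have h' := LinearMap.congr_fun (show (_ : G.X 0 →ₗ[R] J.X (n + 1)) = _ from h) g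
  change (-1 : R) ^ 0 • J.d n ((show G.X 0 →ₗ[R] J.X n from
    (G.homB J).cmp 0 n (zero_add n) (ψ c)) g) = e (c * π (hG.ε g)) at h'
  rw [hy, mul_one, pow_zero, one_smul] at h'
  exact h'

/-- Over a local ring whose maximal ideal is generated by a regular sequence, a complex of
injectives with finitely generated cohomology is eventually exact as soon as its `Hom` out of a
nonzero finite module is. -/
lemma evExact_of_hom [IsNoetherianRing R] [IsLocalRing R] (J : Cpx R)
    [∀ n, Module.Injective R (J.X n)] (rs : List R) (hrs : IsWeaklyRegular R rs)
    (hm : Ideal.ofList rs = IsLocalRing.maximalIdeal R) [Module.Finite R A] [Nontrivial A]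
    {G : Chn R} (hG : G.Resolves A) (H : (J.hom A).EvExact) (hfin : J.EvFin) : J.EvExact := by
  have := G.homB_tot_injective hG J
  let k := R ⧸ IsLocalRing.maximalIdeal R
  let f : k ≃ₗ[R] R ⧸ (Ideal.ofList rs • ⊤ : Submodule R R) :=
    Submodule.quotEquivOfEq _ _ (by rw [hm, smul_eq_mul, Ideal.mul_top])
  obtain ⟨π, hπ⟩ := exists_surjective_residueField (R := R) (A := A)
  let T := (G.homB J).tot
  have hT : T.EvExact := H.imp fun _ hm n hn =>
    ((Chn.homBAug hG J).exactAt_iff (Chn.homB_rowsExact hG J) n).2 (hm n hn)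
  have hRT : (T.hom R).EvExact := hT.imp fun _ hm n hn => (hm n hn).of_equiv
    (fun n => (LinearMap.ringLmapEquivSelf R R (T.X n)).symm) fun n x =>
      (LinearEquiv.symm_apply_eq _).2 (congrArg (T.d n)
        ((LinearMap.ringLmapEquivSelf R R (T.X n)).apply_symm_apply x).symm)
  obtain ⟨m, hkT⟩ := (T.evExact_hom_quotient rs hrs hRT).hom_congr f
  have hkJ : (J.hom k).EvExact := ⟨m + 1, fun n hn => by
    obtain ⟨n, rfl⟩ : ∃ k, n = k + 1 := ⟨n - 1, by omega⟩
    exact hom_exactAt_of_homB_tot hG J π hπ (hkT _ (by omega))⟩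
  have hfin' : (J.hom R).EvFin := hfin.imp fun _ hm n hn => (hm n hn).of_equiv
    (fun n => (LinearMap.ringLmapEquivSelf R R (J.X n)).symm) fun n x =>
      (LinearEquiv.symm_apply_eq _).2 (congrArg (J.d n)
        ((LinearMap.ringLmapEquivSelf R R (J.X n)).apply_symm_apply x).symm)
  have := J.evExact_hom_of_quotient rs hrs (fun r hr => ?_) hfin' (hkJ.hom_congr f.symm)
  · exact this.imp fun _ hm n hn => (hm n hn).of_equiv
      (fun n => LinearMap.ringLmapEquivSelf R R (J.X n)) fun _ _ => rfl
  · rw [IsLocalRing.jacobson_eq_maximalIdeal _ bot_ne_top, ← hm]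
    exact Ideal.subset_span hr

end Cpx

section RegularLocal

open RingTheory.Sequence IsLocalRing
open scoped Pointwise

variable {Q : Type*} [CommRing Q] [IsNoetherianRing Q] [IsLocalRing Q]

/-- In a Noetherian local ring of positive dimension some element of the maximal ideal lies
neither in its square nor in any minimal prime. -/
theorem exists_mem_maximalIdeal_notMem (hdim : 0 < ringKrullDim Q) :
    ∃ x ∈ maximalIdeal Q, x ∉ maximalIdeal Q ^ 2 ∧ ∀ p ∈ minimalPrimes Q, x ∉ p := by
  classical
  have hnm : maximalIdeal Q ∉ minimalPrimes Q := by
    intro h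
    have h0 : (maximalIdeal Q).height = 0 := (Ideal.height_eq_zero_iff (I := maximalIdeal Q)).2 h
    rw [← IsLocalRing.maximalIdeal_height_eq_ringKrullDim, h0] at hdim
    exact lt_irrefl _ hdim
  by_contra! hcon
  have hsub : ((maximalIdeal Q : Ideal Q) : Set Q) ⊆
      ⋃ i ∈ (↑(insert (maximalIdeal Q ^ 2)
        (minimalPrimes.finite_of_isNoetherianRing Q).toFinset) : Set (Ideal Q)),
        ((id i : Ideal Q) : Set Q) := by
    intro x hx
    simp only [Set.mem_iUnion]
    by_cases hx2 : x ∈ maximalIdeal Q ^ 2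
    · exact ⟨_, by simp, hx2⟩
    · obtain ⟨p, hp, hxp⟩ := hcon x hx hx2
      exact ⟨p, by simp [hp], hxp⟩
  rw [Ideal.subset_union_prime (maximalIdeal Q ^ 2) (maximalIdeal Q ^ 2)] at hsub
  · obtain ⟨p, hp, hle⟩ := hsub
    simp only [Finset.mem_insert, Set.Finite.mem_toFinset, id] at hp hle
    rcases hp with rfl | hp
    · have hbot : maximalIdeal Q = ⊥ := by
        refine Submodule.eq_bot_of_le_smul_of_le_jacobson_bot (maximalIdeal Q) _
          (IsNoetherian.noetherian _) ?_ (IsLocalRing.maximalIdeal_le_jacobson _)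
        rwa [smul_eq_mul, ← pow_two]
      refine hnm ?_
      refine ⟨⟨inferInstance, bot_le⟩, fun q _ _ => ?_⟩
      rw [hbot]; exact bot_le
    · have : p.IsPrime := hp.1.1
      have : p = maximalIdeal Q := le_antisymm (IsLocalRing.le_maximalIdeal this.ne_top) hle
      exact hnm (this ▸ hp)
  · intro p hp hne _
    simp only [Finset.mem_insert, Set.Finite.mem_toFinset] at hp
    exact (hp.resolve_left hne).1.1

/-- If a nonzero prime of a Noetherian local ring is generated by an element outside all
minimal primes, the ring is a domain. -/
theorem isDomain_of_span_singleton_isPrime {x : Q} (hx : x ∈ maximalIdeal Q)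
    (hmin : ∀ p ∈ minimalPrimes Q, x ∉ p) (hp : (Ideal.span {x}).IsPrime) : IsDomain Q := by
  obtain ⟨p, hpm, hle⟩ := Ideal.exists_minimalPrimes_le (I := ⊥) (J := Ideal.span {x}) bot_le
  have hprime : p.IsPrime := hpm.1.1
  have hxp : x ∉ p := hmin p hpm
  have hbot : p = ⊥ := by
    refine Submodule.eq_bot_of_le_smul_of_le_jacobson_bot (Ideal.span {x}) _
      (IsNoetherian.noetherian _) ?_ ?_
    · intro y hy
      obtain ⟨a, rfl⟩ := Ideal.mem_span_singleton'.1 (hle hy)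
      rw [smul_eq_mul, mul_comm a x]
      exact Ideal.mul_mem_mul (Ideal.mem_span_singleton_self x)
        ((hprime.mem_or_mem hy).resolve_right hxp)
    · exact ((Ideal.span_singleton_le_iff_mem _).2 hx).trans
        (IsLocalRing.maximalIdeal_le_jacobson _)
  rw [hbot] at hprime
  exact IsDomain.of_bot_isPrime Q

omit [IsNoetherianRing Q] in
/-- An element of the maximal ideal outside its square may replace one of the generators. -/
theorem exists_erase_span_sup_eq [DecidableEq Q] {s : Finset Q}
    (hs : Ideal.span (s : Set Q) = maximalIdeal Q) {x : Q} (hx : x ∈ maximalIdeal Q)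
    (hx2 : x ∉ maximalIdeal Q ^ 2) :
    ∃ y ∈ s, Ideal.span {x} ⊔ Ideal.span ((s.erase y : Finset Q) : Set Q) = maximalIdeal Q := by
  have hx' := hx
  rw [← hs] at hx'
  obtain ⟨a, -, ha⟩ := Submodule.mem_span_finset.1 hx'
  have hmem : ∀ y ∈ s, y ∈ maximalIdeal Q := fun y hy => hs ▸ Ideal.subset_span hy
  obtain ⟨y, hy, hay⟩ : ∃ y ∈ s, IsUnit (a y) := by
    by_contra! hcon
    refine hx2 (ha ▸ Ideal.sum_mem _ fun y hy => ?_)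
    rw [pow_two]
    exact Ideal.mul_mem_mul ((IsLocalRing.mem_maximalIdeal _).2 (hcon y hy)) (hmem y hy)
  refine ⟨y, hy, le_antisymm (sup_le ((Ideal.span_singleton_le_iff_mem _).2 hx) ?_) ?_⟩
  · rw [← hs]
    exact Ideal.span_mono (by simp)
  · conv_lhs => rw [← hs]
    rw [Ideal.span_le]
    intro z hz
    by_cases hzy : z = y
    · subst hzy
      rw [← Finset.add_sum_erase _ _ hz] at ha
      have h1 : a z * z ∈ Ideal.span {x} ⊔ Ideal.span ((s.erase z : Finset Q) : Set Q) := by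
        have : a z * z = x - ∑ y ∈ s.erase z, a y • y := by
          rw [← ha]; simp
        rw [this]
        refine Ideal.sub_mem _ (Ideal.mem_sup_left (Ideal.mem_span_singleton_self x))
          (Ideal.mem_sup_right (Ideal.sum_mem _ fun w hw => ?_))
        exact Ideal.mul_mem_left _ _ (Ideal.subset_span hw)
      exact (Ideal.unit_mul_mem_iff_mem _ hay).1 h1
    · exact Ideal.mem_sup_right (Ideal.subset_span (by simp_all))

omit [IsNoetherianRing Q] [IsLocalRing Q] in
theorem isWeaklyRegular_cons_of_quotient {x : Q} (hx : IsSMulRegular Q x) (rs : List Q)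
    (h : IsWeaklyRegular (Q ⧸ Ideal.span {x}) (rs.map (Ideal.Quotient.mk (Ideal.span {x})))) :
    IsWeaklyRegular Q (x :: rs) := by
  rw [isWeaklyRegular_cons_iff]
  refine ⟨hx, ?_⟩
  have h' : IsWeaklyRegular (Q ⧸ Ideal.span {x}) rs :=
    (isWeaklyRegular_map_algebraMap_iff (Q ⧸ Ideal.span {x}) (Q ⧸ Ideal.span {x}) rs).1 h
  refine (LinearEquiv.isWeaklyRegular_congr
    (Submodule.quotEquivOfEq (Ideal.span {x}) (x • (⊤ : Submodule Q Q)) ?_) rs).1 h'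
  rw [← Submodule.ideal_span_singleton_smul]
  simp

end RegularLocal

theorem isDomain_and_exists_isWeaklyRegular (n : ℕ) : ∀ (Q : Type u) [CommRing Q]
    [IsNoetherianRing Q] [IsLocalRing Q] (s : Finset Q),
    Ideal.span (s : Set Q) = IsLocalRing.maximalIdeal Q → s.card ≤ n →
    (n : WithBot ℕ∞) ≤ ringKrullDim Q → IsDomain Q ∧ ∃ rs : List Q,
      RingTheory.Sequence.IsWeaklyRegular Q rs ∧
        Ideal.ofList rs = IsLocalRing.maximalIdeal Q := by
  classical
  induction n with
  | zero =>
    intro Q _ _ _ s hs hc _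
    have : s = ∅ := by simpa using hc
    subst this
    have hbot : IsLocalRing.maximalIdeal Q = ⊥ := by rw [← hs]; simp
    have : (⊥ : Ideal Q).IsPrime := hbot ▸ inferInstance
    refine ⟨IsDomain.of_bot_isPrime Q, [],
      RingTheory.Sequence.IsWeaklyRegular.nil Q Q, ?_⟩
    rw [hbot, Ideal.ofList_nil]
  | succ n ih =>
    intro Q _ _ _ s hs hc hdim
    obtain ⟨x, hx, hx2, hmin⟩ := exists_mem_maximalIdeal_notMem (Q := Q)
      (lt_of_lt_of_le (by exact_mod_cast Nat.succ_pos n) hdim)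
    obtain ⟨y, hy, hsup⟩ := exists_erase_span_sup_eq hs hx hx2
    have hne : Ideal.span {x} ≠ ⊤ := fun h =>
      (IsLocalRing.maximalIdeal.isMaximal Q).ne_top
        (top_le_iff.1 (h ▸ (Ideal.span_singleton_le_iff_mem _).2 hx))
    have : Nontrivial (Q ⧸ Ideal.span {x}) := Ideal.Quotient.nontrivial_iff.2 hne
    have hsurj : Function.Surjective (Ideal.Quotient.mk (Ideal.span {x})) :=
      Ideal.Quotient.mk_surjective
    have : IsLocalRing (Q ⧸ Ideal.span {x}) := IsLocalRing.of_surjective' _ hsurj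
    have : IsLocalHom (Ideal.Quotient.mk (Ideal.span {x})) :=
      IsLocalHom.of_surjective _ hsurj
    have hcomap := IsLocalRing.maximalIdeal_comap (Ideal.Quotient.mk (Ideal.span {x}))
    have hmap : (IsLocalRing.maximalIdeal Q).map (Ideal.Quotient.mk (Ideal.span {x})) =
        IsLocalRing.maximalIdeal (Q ⧸ Ideal.span {x}) := by
      rw [← hcomap, Ideal.map_comap_of_surjective _ hsurj]
    have hspan : Ideal.span (((s.erase y).image (Ideal.Quotient.mk (Ideal.span {x})) :
        Finset (Q ⧸ Ideal.span {x})) : Set (Q ⧸ Ideal.span {x})) =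
        IsLocalRing.maximalIdeal (Q ⧸ Ideal.span {x}) := by
      rw [← hmap, ← hsup, Ideal.map_sup, Ideal.map_span, Ideal.map_span, Finset.coe_image]
      simp
    have hcard : ((s.erase y).image (Ideal.Quotient.mk (Ideal.span {x}))).card ≤ n := by
      refine Finset.card_image_le.trans ?_
      rw [Finset.card_erase_of_mem hy]; omega
    have hdim' : (n : WithBot ℕ∞) ≤ ringKrullDim (Q ⧸ Ideal.span {x}) := by
      have h1 := Ideal.height_le_ringKrullDim_quotient_add_one hx
      rw [IsLocalRing.maximalIdeal_height_eq_ringKrullDim] at h1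
      have h2 := hdim.trans h1
      push_cast at h2
      generalize ringKrullDim (Q ⧸ Ideal.span {x}) = d at h2 ⊢
      induction d with
      | bot => exact absurd h2 (by simp)
      | coe d =>
        have h3 : (n : ℕ∞) + 1 ≤ d + 1 := by exact_mod_cast h2
        exact_mod_cast (ENat.add_le_add_iff_right ENat.one_ne_top).1 h3
    obtain ⟨hdom, rs', hrs', hof⟩ := ih (Q ⧸ Ideal.span {x}) _ hspan hcard hdim'
    have hD : IsDomain Q :=
      isDomain_of_span_singleton_isPrime hx hmin ((Ideal.Quotient.isDomain_iff_prime _).1 hdom)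
    refine ⟨hD, ?_⟩
    obtain ⟨rs, rfl⟩ := hsurj.list_map rs'
    have hx0 : x ≠ 0 := fun h => hx2 (h ▸ zero_mem _)
    refine ⟨x :: rs, isWeaklyRegular_cons_of_quotient ?_ rs hrs', ?_⟩
    · exact fun a b hab => mul_left_cancel₀ hx0 hab
    · rw [← hcomap, ← hof, ← Ideal.map_ofList, Ideal.comap_map_of_surjective' _ hsurj,
        Ideal.mk_ker, Ideal.ofList_cons, sup_comm]

/-- The maximal ideal of a regular local ring is generated by a regular sequence. -/
theorem IsRegularLocal.exists_isWeaklyRegular {Q : Type u} [CommRing Q] [IsLocalRing Q]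
    (hQ : IsRegularLocal Q) : ∃ rs : List Q, RingTheory.Sequence.IsWeaklyRegular Q rs ∧
      Ideal.ofList rs = IsLocalRing.maximalIdeal Q := by
  obtain ⟨_, s, hs, hc⟩ := hQ
  exact (isDomain_and_exists_isWeaklyRegular s.card Q s hs le_rfl hc.le).2

section Bridge

variable {R : Type u} [CommRing R]

namespace CategoryTheory.ProjectiveResolution

variable {M : ModuleCat.{u} R} (P : ProjectiveResolution M)

/-- The chain complex of modules underlying a projective resolution. -/
def toChn : Chn R where
  X n := P.complex.X n
  d n := (P.complex.d (n + 1) n).hom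
  d_d n x := LinearMap.congr_fun
    (congrArg ModuleCat.Hom.hom (P.complex.d_comp_d (n + 2) (n + 1) n)) x

/-- The chain complex underlying a projective resolution resolves the module. -/
noncomputable def resolves : P.toChn.Resolves M where
  ε := (P.π.f 0).hom
  proj n := (IsProjective.iff_projective (P.complex.X n)).2 (P.projective n)
  surj := (ModuleCat.epi_iff_surjective (P.π.f 0)).1 inferInstance
  ε_d x := LinearMap.congr_fun (congrArg ModuleCat.Hom.hom P.complex_d_comp_π_f_zero) x
  exact_zero := (ShortComplex.moduleCat_exact_iff
    (ShortComplex.mk _ _ P.complex_d_comp_π_f_zero)).1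
      (ShortComplex.exact_of_g_is_cokernel _ P.isColimitCokernelCofork)
  exact_succ n := (ShortComplex.moduleCat_exact_iff _).1 (P.exact_succ n)

theorem isZero_ext_succ_iff (L : ModuleCat.{u} R) (n : ℕ) :
    IsZero (((Ext R (ModuleCat.{u} R) (n + 1)).obj (Opposite.op M)).obj L) ↔
      (P.toChn.homC L).ExactAt (n + 1) := by
  rw [(P.isoExt (n + 1) L).isZero_iff, ← HomologicalComplex.exactAt_iff_isZero_homology,
    HomologicalComplex.exactAt_iff' _ n (n + 1) (n + 2) (by simp) (by simp),
    ShortComplex.moduleCat_exact_iff]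
  constructor
  · intro H (x : P.complex.X (n + 1) →ₗ[R] L) hx
    obtain ⟨(y : P.complex.X n ⟶ L), hy⟩ := H (ModuleCat.ofHom x) (ModuleCat.hom_ext hx)
    exact ⟨y.hom, congrArg ModuleCat.Hom.hom hy⟩
  · intro H (x : P.complex.X (n + 1) ⟶ L) hx
    obtain ⟨(y : P.complex.X n →ₗ[R] L), hy⟩ := H x.hom (congrArg ModuleCat.Hom.hom hx)
    exact ⟨ModuleCat.ofHom y, ModuleCat.hom_ext hy⟩

theorem exists_lTensor_eq_of_isZero_tor (A : ModuleCat.{u} R) (n : ℕ)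
    (H : IsZero (((Tor (ModuleCat.{u} R) (n + 1)).obj A).obj M))
    (x : TensorProduct R A (P.toChn.X (n + 1))) (hx : (P.toChn.d n).lTensor A x = 0) :
    ∃ y, (P.toChn.d (n + 1)).lTensor A y = x := by
  have H' := (P.isoLeftDerivedObj ((MonoidalCategory.tensoringLeft _).obj A) (n + 1)).isZero_iff.1 H
  have H'' := (HomologicalComplex.exactAt_iff_isZero_homology _ _).2 H'
  rw [HomologicalComplex.exactAt_iff' _ (n + 2) (n + 1) n (by simp) (by simp),
    ShortComplex.moduleCat_exact_iff] at H''
  exact H'' x hx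

end CategoryTheory.ProjectiveResolution

/-- Every module has an injective resolution. -/
theorem exists_injective_resolution (L : ModuleCat.{u} R) :
    ∃ (I : Cpx R) (η : L →ₗ[R] I.X 0), (∀ n, Module.Injective R (I.X n)) ∧
      (∀ n, I.ExactAt (n + 1)) ∧ Function.Injective η ∧ (∀ x, I.d 0 (η x) = 0) ∧
      ∀ x, I.d 0 x = 0 → ∃ y, η y = x := by
  have I := injectiveResolution L
  refine ⟨{ X := fun n => I.cocomplex.X n
            d := fun n => (I.cocomplex.d n (n + 1)).hom
            d_d := fun n x => LinearMap.congr_fun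
              (congrArg ModuleCat.Hom.hom (I.cocomplex.d_comp_d n (n + 1) (n + 2))) x },
    (I.ι.f 0).hom, fun n => ?_, fun n => ?_, ?_, fun x => ?_, ?_⟩
  · have := I.injective n
    exact Module.injective_module_of_injective_object R (I.cocomplex.X n)
  · exact (ShortComplex.moduleCat_exact_iff _).1 (I.exact_succ n)
  · exact (ModuleCat.mono_iff_injective (I.ι.f 0)).1 inferInstance
  · exact LinearMap.congr_fun (congrArg ModuleCat.Hom.hom I.ι_f_zero_comp_complex_d) x
  · exact (ShortComplex.moduleCat_exact_iff
      (ShortComplex.mk _ _ I.ι_f_zero_comp_complex_d)).1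
      (ShortComplex.exact_of_f_is_kernel _ I.isLimitKernelFork)

end Bridge

namespace Cpx

section Res

variable {R : Type u} [CommRing R] (Q : Type u) [CommRing Q] [Algebra Q R] (J : Cpx R)
  [∀ n, Module Q (J.X n)] [∀ n, IsScalarTower Q R (J.X n)]

/-- Restriction of scalars of a complex. -/
def res : Cpx Q where
  X n := J.X n
  d n := (J.d n).restrictScalars Q
  d_d := J.d_d

lemma mem_res_B_iff {n : ℕ} (x : J.X n) :
    (show (J.res Q).X n from x) ∈ (J.res Q).B n ↔ x ∈ J.B n := by
  cases n with
  | zero => exact Iff.rfl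
  | succ n => exact Iff.rfl

lemma res_exactAt_iff (n : ℕ) : (J.res Q).ExactAt n ↔ J.ExactAt n :=
  forall_congr' fun x => imp_congr Iff.rfl (J.mem_res_B_iff Q x)

lemma res_finAt (hsurj : Function.Surjective (algebraMap Q R)) {n : ℕ} (H : J.FinAt n) :
    (J.res Q).FinAt n := by
  have H' := Submodule.FG.restrictScalars_of_surjective (R := Q) H hsurj
  let g : (J.X n ⧸ J.B n) →ₗ[Q] ((J.res Q).X n ⧸ (J.res Q).B n) :=
    { toFun := Quotient.map' (s₁ := (J.B n).quotientRel) (s₂ := ((J.res Q).B n).quotientRel) id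
        fun a b hab => by
          rw [Submodule.quotientRel_def] at hab
          exact (Submodule.quotientRel_def _).2 ((J.mem_res_B_iff Q (a - b)).2 hab)
      map_add' := by rintro ⟨a⟩ ⟨b⟩; rfl
      map_smul' := by rintro q ⟨a⟩; rfl }
  have : ((J.res Q).Z n).map ((J.res Q).B n).mkQ =
      (((J.Z n).map (J.B n).mkQ).restrictScalars Q).map g := by
    ext z
    constructor
    · rintro ⟨x, hx, rfl⟩
      exact ⟨_, ⟨x, hx, rfl⟩, rfl⟩
    · rintro ⟨_, ⟨x, hx, rfl⟩, rfl⟩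
      exact ⟨x, hx, rfl⟩
  rw [FinAt, this]
  exact H'.map g

lemma res_hom_exactAt (hsurj : Function.Surjective (algebraMap Q R)) {N : Type u} [AddCommGroup N]
    [Module R N] [Module Q N] [IsScalarTower Q R N] {n : ℕ} (H : (J.hom N).ExactAt n) :
    ((J.res Q).hom N).ExactAt n := by
  intro (x : N →ₗ[Q] J.X n) hx
  have h := H (x.extendScalarsOfSurjective hsurj)
    (LinearMap.ext fun a => LinearMap.congr_fun hx a)
  cases n with
  | zero => exact LinearMap.ext fun a => LinearMap.congr_fun h a
  | succ n =>
    obtain ⟨(y : N →ₗ[R] J.X n), hy⟩ := h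
    exact ⟨y.restrictScalars Q, LinearMap.ext fun a => LinearMap.congr_fun hy a⟩

end Res

/-- Over a quotient of a regular local ring by a regular sequence, a complex of injectives with
finitely generated cohomology is eventually exact once `Hom(N, J)` is, for some `N ≠ 0`. -/
theorem evExact_of_hom_quotient {Q : Type u} [CommRing Q] [IsLocalRing Q]
    (hQ : IsRegularLocal Q) {f : List Q} (hf : RingTheory.Sequence.IsWeaklyRegular Q f)
    (J : Cpx (Q ⧸ Ideal.ofList f)) (hJ : ∀ n, Module.Injective (Q ⧸ Ideal.ofList f) (J.X n))
    (N : Type u) [AddCommGroup N] [Module (Q ⧸ Ideal.ofList f) N]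
    [Module.Finite (Q ⧸ Ideal.ofList f) N] [Nontrivial N]
    (H : (J.hom N).EvExact) (hfin : J.EvFin) : J.EvExact := by
  have : IsNoetherianRing Q := hQ.1
  obtain ⟨rs, hrs, hm⟩ := hQ.exists_isWeaklyRegular
  have hsurj : Function.Surjective (algebraMap Q (Q ⧸ Ideal.ofList f)) :=
    Ideal.Quotient.mk_surjective
  let _ : ∀ n, Module Q (J.X n) := fun n => Module.compHom _ (algebraMap Q (Q ⧸ Ideal.ofList f))
  have : ∀ n, IsScalarTower Q (Q ⧸ Ideal.ofList f) (J.X n) := fun n =>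
    IsScalarTower.of_algebraMap_smul fun _ _ => rfl
  let _ : Module Q N := Module.compHom _ (algebraMap Q (Q ⧸ Ideal.ofList f))
  have : IsScalarTower Q (Q ⧸ Ideal.ofList f) N := IsScalarTower.of_algebraMap_smul fun _ _ => rfl
  have : Module.Finite Q (Q ⧸ Ideal.ofList f) := inferInstance
  have : Module.Finite Q N := Module.Finite.trans (Q ⧸ Ideal.ofList f) N
  have hK : Killed (Ideal.ofList f) N := fun a ha x => by
    rw [← algebraMap_smul (Q ⧸ Ideal.ofList f) a x,
      show algebraMap Q (Q ⧸ Ideal.ofList f) a = 0 from Ideal.Quotient.eq_zero_iff_mem.2 ha,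
      zero_smul]
  have hrel : ∀ n, RelInj (Ideal.ofList f) (J.X n) := fun n => RelInj.of_quotient
  obtain ⟨J', hJ', hNJ', hfin', himp⟩ := exists_injective_of_isWeaklyRegular f hf (J.res Q)
    hrel (N := N) hK
    (H.imp fun m hm n hn => J.res_hom_exactAt Q hsurj (hm n hn))
    (hfin.imp fun m hm n hn => J.res_finAt Q hsurj (hm n hn))
  have hG := (projectiveResolution (ModuleCat.of Q N)).resolves
  have hres := himp (J'.evExact_of_hom rs hrs hm (A := N) hG hNJ' hfin')
  exact hres.imp fun m hm n hn => (J.res_exactAt_iff Q n).1 (hm n hn)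

end Cpx

theorem stmt_0 (Q : Type u) [CommRing Q] [IsLocalRing Q] (hQ : IsRegularLocal Q)
    (f : List Q) (hf : RingTheory.Sequence.IsRegular Q f)
    (M N L : ModuleCat.{u} (Q ⧸ Ideal.ofList f))
    [Module.Finite (Q ⧸ Ideal.ofList f) M] [Module.Finite (Q ⧸ Ideal.ofList f) N]
    [Module.Finite (Q ⧸ Ideal.ofList f) L]
    (hN : Nontrivial N)
    (htor : ∀ i : ℕ, 0 < i →
      IsZero (((Tor (ModuleCat.{u} (Q ⧸ Ideal.ofList f)) i).obj M).obj N))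
    (hext : ∃ n : ℕ, ∀ i : ℕ, n ≤ i →
      IsZero (((Ext (Q ⧸ Ideal.ofList f) (ModuleCat.{u} (Q ⧸ Ideal.ofList f)) i).obj
        (Opposite.op (MonoidalCategory.tensorObj M N))).obj L)) :
    ∃ n : ℕ, ∀ i : ℕ, n ≤ i →
      IsZero (((Ext (Q ⧸ Ideal.ofList f) (ModuleCat.{u} (Q ⧸ Ideal.ofList f)) i).obj
        (Opposite.op M)).obj L) := by
  have : IsNoetherianRing Q := hQ.1
  obtain ⟨I, η, hI, hIe, hη, hd, hl⟩ := exists_injective_resolution L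
  have P := projectiveResolution M
  have G := projectiveResolution N
  have T := projectiveResolution (MonoidalCategory.tensorObj M N)
  have htens : (I.hom (TensorProduct (Q ⧸ Ideal.ofList f) M N)).EvExact := by
    obtain ⟨n, hn⟩ := hext
    refine ⟨n + 1, fun i hi => ?_⟩
    obtain ⟨i, rfl⟩ : ∃ j, i = j + 1 := ⟨i - 1, by omega⟩
    exact (Chn.homC_exactAt_iff T.resolves I hIe η hη hd hl (i + 1)).1
      ((T.isZero_ext_succ_iff L i).1 (hn _ (by omega)))
  have hJN : ((P.toChn.homB I).tot.hom N).EvExact :=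
    Chn.evExact_hom_tot P.resolves G.resolves
      (fun n x hx => G.exists_lTensor_eq_of_isZero_tor M n (htor _ n.succ_pos) x hx) I htens
  have hrows := Chn.homB_rowsExact P.resolves I
  have hfin : (P.toChn.homB I).tot.EvFin := ⟨0, fun n _ =>
    (Chn.homBAug P.resolves I).finAt hrows (I.finAt_hom_of_resolution hIe η hη hl n M)⟩
  obtain ⟨n, hn⟩ := Cpx.evExact_of_hom_quotient hQ hf.toIsWeaklyRegular _
    (Chn.homB_tot_injective P.resolves I) N hJN hfin
  refine ⟨n + 1, fun i hi => ?_⟩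
  obtain ⟨i, rfl⟩ : ∃ j, i = j + 1 := ⟨i - 1, by omega⟩
  rw [P.isZero_ext_succ_iff, Chn.homC_exactAt_iff P.resolves I hIe η hη hd hl,
    ← (Chn.homBAug P.resolves I).exactAt_iff hrows]
  exact hn _ (by omega)
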